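/- Suppose J ∈ C¹(X) satisfies (I1)–(I8), dim X⁺ = ∞, J is even, G satisfies condition (G), and condition (M)_0^β holds for every β > 0. Then J has infinitely many distinct critical orbits. -/

import Mathlib

/-!
STATEMENT 3.  Abstract multiplicity theorem: if J ∈ C¹(X) on X = X⁺ ⊕ X⁻ satisfies
(I1)–(I8), dim X⁺ = ∞, J is even, a group G satisfies (G), and (M)_0^β holds for
every β > 0, then J has infinitely many distinct critical orbits.
-/

open Filter Topology

noncomputable section

variable {P Q : Type*}
  [NormedAddCommGroup P] [InnerProductSpace ℝ P] [CompleteSpace P]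
  [NormedAddCommGroup Q] [NormedSpace ℝ Q] [CompleteSpace Q]

/-- The norm ‖u‖ = (‖u⁺‖² + ‖u⁻‖²)^{1/2} on X = X⁺ ⊕ X⁻. -/
def XNorm (u : P × Q) : ℝ := Real.sqrt (‖u.1‖ ^ 2 + ‖u.2‖ ^ 2)

/-- Convergence in the 𝒯 topology: norm convergence in X⁺, weak convergence in X⁻. -/
def TConv (u : ℕ → P × Q) (v : P × Q) : Prop :=
  Tendsto (fun n => (u n).1) atTop (nhds v.1) ∧
    ∀ ℓ : Q →L[ℝ] ℝ, Tendsto (fun n => ℓ (u n).2) atTop (nhds (ℓ v.2))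

/-- The functional J(u) = ½‖u⁺‖² − I(u). -/
def Jfun (I : P × Q → ℝ) (u : P × Q) : ℝ := ‖u.1‖ ^ 2 / 2 - I u

/-- ℳ = {u : I′(u)|_{X⁻} = 0}. -/
def MSet (I : P × Q → ℝ) : Set (P × Q) :=
  {u | ∀ v : Q, fderiv ℝ I u (0, v) = 0}

/-- 𝒩 = {u ∈ ℳ ∖ X⁻ : J′(u)(u) = 0}. -/
def NSet (I : P × Q → ℝ) : Set (P × Q) :=
  {u | u ∈ MSet I ∧ u.1 ≠ 0 ∧ fderiv ℝ (Jfun I) u u = 0}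

/-- The hypotheses (I1)–(I8) on I (with the data r, a of (I6)). -/
structure HypI (I : P × Q → ℝ) (r a : ℝ) : Prop where
  refl : Function.Surjective (NormedSpace.inclusionInDoubleDual ℝ Q)
  i1 : ContDiff ℝ 1 I ∧ I 0 = 0 ∧ ∀ u, 0 ≤ I u
  i2 : ∀ (u : ℕ → P × Q) (v : P × Q), TConv u v →
    ∀ c : ℝ, c < I v → ∀ᶠ n in atTop, c < I (u n)
  i3 : ∀ (u : ℕ → P × Q) (v : P × Q), TConv u v →
    Tendsto (fun n => I (u n)) atTop (nhds (I v)) → Tendsto u atTop (nhds v)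
  i4 : ∀ M : ℝ, ∃ R : ℝ, ∀ u : P × Q, R ≤ XNorm u → M ≤ ‖u.1‖ + I u
  i5 : ∀ u ∈ MSet I, ∀ v : Q, v ≠ 0 → I u < I (u + (0, v))
  i6 : 0 < r ∧ a = sInf {y : ℝ | ∃ p : P, ‖p‖ = r ∧ y = Jfun I (p, 0)} ∧ 0 < a
  i7 : ∀ (t : ℕ → ℝ) (u : ℕ → P × Q) (p : P), Tendsto t atTop atTop →
    Tendsto (fun n => (u n).1) atTop (nhds p) → p ≠ 0 →
    Tendsto (fun n => I (t n • u n) / t n ^ 2) atTop atTop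
  i8 : ∀ u ∈ NSet I, ∀ t : ℝ, 0 ≤ t → ∀ v : Q,
    (t ^ 2 - 1) / 2 * fderiv ℝ I u u + I u - I (t • u + (0, v)) ≤ 0

/-- The map m : X⁺ → ℳ (u⁺ ↦ unique point of (u⁺ + X⁻) ∩ ℳ). -/
structure IsMMap (I : P × Q → ℝ) (m : P → P × Q) : Prop where
  mem : ∀ p : P, m p ∈ MSet I ∧ (m p).1 = p
  uniq : ∀ (p : P) (w : P × Q), w ∈ MSet I → w.1 = p → w = m p

/-- The mountain pass value c_ℳ over paths in ℳ. -/
def cM (I : P × Q → ℝ) (r : ℝ) : ℝ :=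
  sInf {y : ℝ | ∃ γ : C(Set.Icc (0:ℝ) 1, P × Q),
    (∀ t, γ t ∈ MSet I) ∧ γ ⟨0, by norm_num⟩ = 0 ∧
    r < ‖(γ ⟨1, by norm_num⟩).1‖ ∧ Jfun I (γ ⟨1, by norm_num⟩) < 0 ∧
    y = sSup (Set.range fun t => Jfun I (γ t))}


section Multiplicity

variable {G : Type*} [Group G]

/-- A Cerami-type sequence for 𝒥 = J∘m between the levels 0 and β
(0 ≤ liminf 𝒥(u_n) ≤ limsup 𝒥(u_n) ≤ β and (1+‖u_n‖)𝒥′(u_n) → 0). -/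
def CeramiBdd (I : P × Q → ℝ) (m : P → P × Q) (β : ℝ) (u : ℕ → P) : Prop :=
  Tendsto (fun n => (1 + ‖u n‖) * ‖fderiv ℝ (fun p => Jfun I (m p)) (u n)‖)
    atTop (nhds 0) ∧
  ∀ ε : ℝ, 0 < ε → ∀ᶠ n in atTop,
    -ε ≤ Jfun I (m (u n)) ∧ Jfun I (m (u n)) ≤ β + ε

/-- The action of g restricted to X⁺. -/
def actP (act : G → P × Q → P × Q) (g : G) (p : P) : P := (act g (p, 0)).1

/-- There are finitely many critical orbits of 𝒥 in {0 ≤ 𝒥 ≤ β}. -/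
def FinOrbits (I : P × Q → ℝ) (m : P → P × Q) (act : G → P × Q → P × Q)
    (β : ℝ) : Prop :=
  ∃ S : Finset P, ∀ p : P, fderiv ℝ (fun q => Jfun I (m q)) p = 0 →
    0 ≤ Jfun I (m p) → Jfun I (m p) ≤ β → ∃ q ∈ S, ∃ g : G, actP act g q = p

/-- Condition (M)_0^β. -/
def McondZero (I : P × Q → ℝ) (m : P → P × Q) (act : G → P × Q → P × Q)
    (β : ℝ) : Prop :=
  -- (a): Cerami-bounded sequences are bounded (limsup ‖u_n‖ ≤ M)
  (∃ M : ℝ, 0 < M ∧ ∀ u : ℕ → P, CeramiBdd I m β u →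
    ∀ ε : ℝ, 0 < ε → ∀ᶠ n in atTop, ‖u n‖ ≤ M + ε) ∧
  -- (b)
  (FinOrbits I m act β → ∃ mβ : ℝ, 0 < mβ ∧
    ∀ u v : ℕ → P, CeramiBdd I m β u → CeramiBdd I m β v →
      (∀ᶠ n in atTop, ‖u n - v n‖ < mβ) →
      -- liminf ‖u_n − v_n‖ = 0
      ∀ ε : ℝ, 0 < ε → ∃ᶠ n in atTop, ‖u n - v n‖ < ε)

section WeakComp
variable {Q : Type*} [NormedAddCommGroup Q] [NormedSpace ℝ Q]

theorem aux_separating (q : ℕ → Q) :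
    ∃ ℓ : ℕ → (Q →L[ℝ] ℝ), ∀ y ∈ closure (Submodule.span ℝ (Set.range q) : Set Q),
      (∀ k, ℓ k y = 0) → y = 0 := by
  have hsep : TopologicalSpace.IsSeparable (closure (Submodule.span ℝ (Set.range q) : Set Q)) :=
    ((Set.countable_range q).isSeparable.span ).closure
  obtain ⟨c, hc, hsub⟩ := hsep
  have hne : c.Nonempty := by
    by_contra h
    rw [Set.not_nonempty_iff_eq_empty] at h
    subst h
    have : (0:Q) ∈ closure (∅ : Set Q) := hsub (subset_closure (Submodule.zero_mem _))
    simp at this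
  obtain ⟨y, rfl⟩ := hc.exists_eq_range hne
  have hex : ∀ k, ∃ g : Q →L[ℝ] ℝ, ‖g‖ ≤ 1 ∧ g (y k) = ‖y k‖ := by
    intro k
    obtain ⟨g, h1, h2⟩ := exists_dual_vector'' ℝ (y k)
    exact ⟨g, h1, by simpa using h2⟩
  choose ℓ hℓ1 hℓ2 using hex
  refine ⟨ℓ, fun z hz h0 => ?_⟩
  have hz' := hsub hz
  by_contra hne0
  have hpos : 0 < ‖z‖ := norm_pos_iff.mpr hne0
  obtain ⟨w, ⟨k, rfl⟩, hk⟩ := Metric.mem_closure_iff.mp hz' (‖z‖ / 2) (by positivity)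
  have e1 : ‖y k‖ ≤ ‖y k - z‖ := by
    have : ‖y k‖ = ℓ k (y k - z) := by rw [map_sub, h0 k, hℓ2 k, sub_zero]
    rw [this]
    calc ℓ k (y k - z) ≤ ‖ℓ k (y k - z)‖ := le_abs_self _
      _ ≤ ‖ℓ k‖ * ‖y k - z‖ := (ℓ k).le_opNorm _
      _ ≤ 1 * ‖y k - z‖ := by gcongr; exact hℓ1 k
      _ = _ := one_mul _
  rw [dist_eq_norm, norm_sub_rev] at hk
  have e2 : ‖z‖ ≤ ‖y k‖ + ‖y k - z‖ := by
    have : z = y k - (y k - z) := by abel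
    calc ‖z‖ = ‖y k - (y k - z)‖ := by rw [← this]
      _ ≤ _ := norm_sub_le _ _
  linarith

theorem weak_seq_compact (hrefl : Function.Surjective (NormedSpace.inclusionInDoubleDual ℝ Q))
    (q : ℕ → Q) (C : ℝ) (hq : ∀ n, ‖q n‖ ≤ C) :
    ∃ (z : Q) (ψ : ℕ → ℕ), StrictMono ψ ∧
      ∀ ℓ : Q →L[ℝ] ℝ, Tendsto (fun n => ℓ (q (ψ n))) atTop (𝓝 (ℓ z)) := by
  set S : Set (WeakSpace ℝ Q) := Set.range (fun n => toWeakSpace ℝ Q (q n)) with hS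
  have hcomp : IsCompact (closure S) := by
    apply NormedSpace.isCompact_closure_of_isBounded
    · refine (Metric.isBounded_closedBall (x := (0:Q)) (r := C)).subset ?_
      rintro x ⟨n, hn⟩
      have : q n = x := hn
      rw [← this]; simpa using hq n
    · intro f _
      obtain ⟨x, hx⟩ := hrefl f
      exact ⟨toWeakSpace ℝ Q x, hx⟩
  obtain ⟨ℓ, hℓ⟩ := aux_separating q
  have hcl : ∀ x ∈ closure S, (toWeakSpace ℝ Q).symm x ∈
      closure (Submodule.span ℝ (Set.range q) : Set Q) := by
    intro x hx
    have h1 : S ⊆ toWeakSpace ℝ Q '' (Submodule.span ℝ (Set.range q) : Set Q) := by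
      rintro _ ⟨n, rfl⟩
      exact ⟨q n, Submodule.subset_span ⟨n, rfl⟩, rfl⟩
    have h2 := closure_mono h1 hx
    rw [← Convex.toWeakSpace_closure ℝ (Submodule.convex _)] at h2
    obtain ⟨y, hy, rfl⟩ := h2
    simpa using hy
  have hcont : ∀ g : Q →L[ℝ] ℝ, Continuous fun x : WeakSpace ℝ Q =>
      g ((toWeakSpace ℝ Q).symm x) := by
    intro g
    exact WeakBilin.eval_continuous _ g
  haveI : CompactSpace (closure S) := isCompact_iff_compactSpace.mp hcomp
  haveI : TopologicalSpace.MetrizableSpace (closure S) :=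
    Metric.PiNatEmbed.TopologicalSpace.MetrizableSpace.of_countable_separating
    (fun n (k : closure S) ↦ ℓ n ((toWeakSpace ℝ Q).symm k.1))
    (fun n ↦ (hcont (ℓ n)).comp continuous_subtype_val) (by
      intro x y hxy
      by_contra hcon
      push Not at hcon
      apply hxy
      have hmem : (toWeakSpace ℝ Q).symm x.1 - (toWeakSpace ℝ Q).symm y.1 ∈
          closure (Submodule.span ℝ (Set.range q) : Set Q) := by
        have hx := hcl x.1 x.2
        have hy := hcl y.1 y.2
        rw [← Submodule.topologicalClosure_coe] at hx hy ⊢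
        exact Submodule.sub_mem _ hx hy
      have := hℓ _ hmem (fun k => by rw [map_sub, hcon k, sub_self])
      rw [sub_eq_zero] at this
      exact Subtype.ext ((toWeakSpace ℝ Q).symm.injective this))
  obtain ⟨z, ψ, hψ, hlim⟩ := CompactSpace.tendsto_subseq
    (fun n => (⟨toWeakSpace ℝ Q (q n), subset_closure ⟨n, rfl⟩⟩ : closure S))
  refine ⟨(toWeakSpace ℝ Q).symm z.1, ψ, hψ, fun g => ?_⟩
  have := (((hcont g).comp continuous_subtype_val).tendsto z).comp hlim
  simpa [Function.comp_def] using this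
end WeakComp

section Combinatorial
open scoped Classical

/-- flip of a signed label -/
def flipL {ι : Type*} (x : ι × Bool) : ι × Bool := (x.1, !x.2)

/-- Fan type cochain -/
def fanC {ι : Type*} : List ι → Multiset (ι × Bool) → ZMod 2
  | [], σ => if σ = 0 then 1 else 0
  | j :: Λ, σ =>
    if σ.filter (fun x => x.1 = j) = 0 then fanC Λ (σ.filter (fun x => x.1 ≠ j))
    else if σ.filter (fun x => x.1 = j) = {(j, decide (Odd (Multiset.card σ)))} then
      fanC Λ (σ.filter (fun x => x.1 ≠ j)) else 0

theorem fanC_zero {ι : Type*} (Λ : List ι) : fanC Λ 0 = 1 := by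
  induction Λ with
  | nil => simp [fanC]
  | cons j Λ ih => simp [fanC, ih]

theorem fanC_card {ι : Type*} (Λ : List ι) (σ : Multiset (ι × Bool)) (h : fanC Λ σ ≠ 0) :
    Multiset.card σ ≤ Λ.length := by
  induction Λ generalizing σ with
  | nil =>
    simp only [fanC] at h
    split_ifs at h with h1
    · simp [h1]
    · exact absurd rfl h
  | cons j Λ ih =>
    have hc : Multiset.card σ = Multiset.card (σ.filter (fun x => x.1 = j)) +
        Multiset.card (σ.filter (fun x => x.1 ≠ j)) := by
      rw [← Multiset.card_add, Multiset.filter_add_not]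
    simp only [fanC] at h
    split_ifs at h with h1 h2
    · have := ih _ h
      rw [hc, h1]; simp; simp at this; omega
    · have := ih _ h
      rw [hc, h2]; simp; simp at this; omega
    · exact absurd rfl h

theorem fanC_cons {ι : Type*} (Λ : List ι) (j : ι) (b : Bool) (k : ℕ) (B : Multiset (ι × Bool))
    (hB : ∀ x ∈ B, x.1 ≠ j) :
    fanC (j :: Λ) (Multiset.replicate k (j, b) + B) =
      if k = 0 then fanC Λ B else if k = 1 ∧ b = decide (Odd (Multiset.card B + 1)) then
        fanC Λ B else 0 := by
  have h1 : (Multiset.replicate k (j, b) + B).filter (fun x => x.1 = j)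
      = Multiset.replicate k (j, b) := by
    rw [Multiset.filter_add]
    have : B.filter (fun x => x.1 = j) = 0 := Multiset.filter_eq_nil.2 hB
    rw [this, add_zero]
    apply Multiset.filter_eq_self.2
    intro a ha
    rw [Multiset.eq_of_mem_replicate ha]
  have h2 : (Multiset.replicate k (j, b) + B).filter (fun x => x.1 ≠ j) = B := by
    rw [Multiset.filter_add]
    have : (Multiset.replicate k (j, b)).filter (fun x => x.1 ≠ j) = 0 := by
      apply Multiset.filter_eq_nil.2
      intro a ha
      rw [Multiset.eq_of_mem_replicate ha]; simp
    rw [this, zero_add]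
    exact Multiset.filter_eq_self.2 hB
  simp only [fanC]
  rw [h1, h2]
  by_cases hk : k = 0
  · simp [hk]
  by_cases hk1 : k = 1
  · subst hk1
    simp [add_comm]
  · rw [if_neg, if_neg, if_neg hk, if_neg]
    · tauto
    · intro h
      have := congrArg Multiset.card h
      simp at this; omega
    · intro h
      have := congrArg Multiset.card h
      simp at this; omega

theorem zmod2_add_self (x : ZMod 2) : x + x = 0 := CharTwo.add_self_eq_zero x

theorem fanC_delta {ι : Type*} (Λ : List ι) (σ : Multiset (ι × Bool))
    (hΛ : ∀ x ∈ σ, x.1 ∈ Λ) (hc : ∀ j, ¬ ((j, true) ∈ σ ∧ (j, false) ∈ σ)) :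
    (σ.map (fun v => fanC Λ (σ.erase v))).sum = fanC Λ σ + fanC Λ (σ.map flipL) := by
  induction Λ generalizing σ with
  | nil =>
    have : σ = 0 := by
      apply Multiset.eq_zero_of_forall_notMem
      intro a ha
      simpa using hΛ a ha
    subst this
    simp [fanC]; decide
  | cons j Λ ih =>
    obtain ⟨k, b, B, hB, rfl⟩ : ∃ (k : ℕ) (b : Bool) (B : Multiset (ι × Bool)),
        (∀ x ∈ B, x.1 ≠ j) ∧ σ = Multiset.replicate k (j, b) + B := by
      have h0 : ∃ b : Bool, ∀ x ∈ σ.filter (fun x => x.1 = j), x = (j, b) := by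
        by_cases ht : (j, true) ∈ σ
        · refine ⟨true, ?_⟩
          rintro ⟨i, b⟩ hx
          rw [Multiset.mem_filter] at hx
          obtain ⟨hx, rfl⟩ := hx
          rcases b with _ | _
          · exact absurd ⟨ht, hx⟩ (hc i)
          · rfl
        · refine ⟨false, ?_⟩
          rintro ⟨i, b⟩ hx
          rw [Multiset.mem_filter] at hx
          obtain ⟨hx, rfl⟩ := hx
          rcases b with _ | _
          · rfl
          · exact absurd hx ht
      obtain ⟨b, hb⟩ := h0
      refine ⟨Multiset.card (σ.filter (fun x => x.1 = j)), b, σ.filter (fun x => x.1 ≠ j), fun x hx => (Multiset.mem_filter.1 hx).2, ?_⟩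
      rw [← Multiset.eq_replicate_card.2 hb, Multiset.filter_add_not]
    have hBΛ : ∀ x ∈ B, x.1 ∈ Λ := by
      intro x hx
      have := hΛ x (Multiset.mem_add.2 (Or.inr hx))
      rw [List.mem_cons] at this
      exact this.resolve_left (hB x hx)
    have hBc : ∀ i, ¬ ((i, true) ∈ B ∧ (i, false) ∈ B) := fun i h =>
      hc i ⟨Multiset.mem_add.2 (Or.inr h.1), Multiset.mem_add.2 (Or.inr h.2)⟩
    have IH := ih B hBΛ hBc
    have hfl : (Multiset.replicate k (j, b) + B).map flipL =
        Multiset.replicate k (j, !b) + B.map flipL := by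
      simp [flipL, Multiset.map_replicate]
    have hBf : ∀ x ∈ B.map flipL, x.1 ≠ j := by
      intro x hx
      rw [Multiset.mem_map] at hx
      obtain ⟨y, hy, rfl⟩ := hx
      exact hB y hy
    rw [hfl, fanC_cons Λ j b k B hB, fanC_cons Λ j (!b) k _ hBf, Multiset.card_map,
      Multiset.map_add, Multiset.sum_add]
    have hS2 : B.map (fun v => fanC (j :: Λ) ((Multiset.replicate k (j, b) + B).erase v)) =
        B.map (fun v => if k = 0 then fanC Λ (B.erase v) else
          if k = 1 ∧ b = decide (Odd (Multiset.card B)) then fanC Λ (B.erase v) else 0) := by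
      apply Multiset.map_congr rfl
      intro v hv
      rw [Multiset.erase_add_right_pos _ hv, fanC_cons Λ j b k (B.erase v)
        (fun x hx => hB x (Multiset.mem_of_mem_erase hx)), Multiset.card_erase_add_one hv]
    rw [hS2, Multiset.map_replicate, Multiset.sum_replicate]
    rcases Nat.eq_zero_or_pos k with hk | hk
    · subst hk
      simpa using IH
    have herase : (Multiset.replicate k (j, b) + B).erase (j, b) =
        Multiset.replicate (k - 1) (j, b) + B := by
      obtain ⟨l, rfl⟩ : ∃ l, k = l + 1 := ⟨k - 1, by omega⟩
      rw [Multiset.replicate_succ]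
      simp
    rw [herase, fanC_cons Λ j b (k - 1) B hB]
    have hk0 : k ≠ 0 := by omega
    simp only [hk0, if_false]
    by_cases hk1 : k = 1
    · subst hk1
      simp only [true_and, Nat.sub_self, if_true, one_smul]
      have hpar : decide (Odd (Multiset.card B + 1)) = ! decide (Odd (Multiset.card B)) := by
        rcases Nat.even_or_odd (Multiset.card B) with h | h <;> simp [h, parity_simps] 
      rw [hpar]
      by_cases hb : b = decide (Odd (Multiset.card B))
      · simp only [← hb, if_true]
        rw [IH, ← add_assoc, zmod2_add_self]
        have : ¬ (b = !b) := by cases b <;> simp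
        simp [this]
      · have hb' : b = !decide (Odd (Multiset.card B)) := by
          revert hb; generalize decide (Odd (Multiset.card B)) = c; cases b <;> cases c <;> simp
        rw [← hb']
        have : ¬ ((!b) = b) := by cases b <;> simp
        simp [hb, this]
    · simp only [hk1, false_and, if_false]
      by_cases hk2 : k = 2
      · subst hk2
        simp [two_smul, zmod2_add_self]
      · have : k - 1 ≠ 0 := by omega
        have h' : k - 1 ≠ 1 := by omega
        simp [this, h']

end Combinatorial

section Chains
open scoped Classical

/-- chains mod 2 -/
abbrev Chn (E : Type*) := Multiset E →₀ ZMod 2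

/-- boundary -/
def bdC (E : Type*) : Chn E →ₗ[ZMod 2] Chn E :=
  Finsupp.linearCombination (ZMod 2)
    (fun s => (s.map (fun v => (Finsupp.single (s.erase v) 1 : Chn E))).sum)

/-- cone -/
def coneC {E : Type*} (x : E) : Chn E →ₗ[ZMod 2] Chn E :=
  Finsupp.linearCombination (ZMod 2) (fun s => (Finsupp.single (x ::ₘ s) 1 : Chn E))

/-- antipode -/
def negC (E : Type*) [Neg E] : Chn E →ₗ[ZMod 2] Chn E :=
  Finsupp.linearCombination (ZMod 2) (fun s => (Finsupp.single (s.map Neg.neg) 1 : Chn E))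

theorem lc_single {α M : Type*} [AddCommGroup M] [Module (ZMod 2) M] (f : α → M) (a : α) :
    Finsupp.linearCombination (ZMod 2) f (Finsupp.single a 1) = f a := by simp

theorem chn_ext {E M : Type*} [AddCommGroup M] [Module (ZMod 2) M] (f g : Chn E →ₗ[ZMod 2] M)
    (h : ∀ s, f (Finsupp.single s 1) = g (Finsupp.single s 1)) : f = g :=
  Finsupp.lhom_ext' fun s => LinearMap.ext_ring (h s)

theorem chn_add_self {M : Type*} [AddCommGroup M] [Module (ZMod 2) M] (c : M) : c + c = 0 := by
  have : ((1 : ZMod 2) + 1) • c = 0 := by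
    have : (1 : ZMod 2) + 1 = 0 := by decide
    rw [this, zero_smul]
  simpa [add_smul] using this

theorem bd_single {E : Type*} (s : Multiset E) : bdC E (Finsupp.single s 1) =
    (s.map (fun v => (Finsupp.single (s.erase v) 1 : Chn E))).sum := lc_single _ _

theorem cone_single {E : Type*} (x : E) (s : Multiset E) : coneC x (Finsupp.single s 1) =
    Finsupp.single (x ::ₘ s) 1 := lc_single _ _

theorem neg_single {E : Type*} [Neg E] (s : Multiset E) : negC E (Finsupp.single s 1) =
    Finsupp.single (s.map Neg.neg) 1 := lc_single _ _

theorem bd_cone {E : Type*} (x : E) (c : Chn E) :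
    bdC E (coneC x c) = c + coneC x (bdC E c) := by
  have : bdC E ∘ₗ coneC x = LinearMap.id + coneC x ∘ₗ bdC E := by
    apply chn_ext
    intro s
    simp only [LinearMap.comp_apply, LinearMap.add_apply, LinearMap.id_apply]
    rw [cone_single, bd_single, bd_single, map_multiset_sum, Multiset.map_map]
    rw [Multiset.map_cons, Multiset.sum_cons, Multiset.erase_cons_head]
    congr 2
    apply Multiset.map_congr rfl
    intro v hv
    simp only [Function.comp]
    rw [cone_single, Multiset.erase_cons_tail_of_mem hv]
  exact LinearMap.congr_fun this c

theorem bd_bd {E : Type*} (c : Chn E) : bdC E (bdC E c) = 0 := by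
  have : bdC E ∘ₗ bdC E = 0 := by
    apply chn_ext
    intro s
    simp only [LinearMap.comp_apply, LinearMap.zero_apply]
    induction s using Multiset.induction with
    | empty => rw [bd_single]; simp
    | cons x s ih =>
      rw [← cone_single, bd_cone, map_add, bd_cone, ih, map_zero, add_zero, chn_add_self]
  exact LinearMap.congr_fun this c

theorem neg_neg_C {E : Type*} [InvolutiveNeg E] (c : Chn E) : negC E (negC E c) = c := by
  have : negC E ∘ₗ negC E = LinearMap.id := by
    apply chn_ext
    intro s
    simp only [LinearMap.comp_apply, LinearMap.id_apply]
    rw [neg_single, neg_single, Multiset.map_map]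
    simp
  exact LinearMap.congr_fun this c

theorem neg_cone {E : Type*} [Neg E] (x : E) (c : Chn E) :
    negC E (coneC x c) = coneC (-x) (negC E c) := by
  have : negC E ∘ₗ coneC x = coneC (-x) ∘ₗ negC E := by
    apply chn_ext
    intro s
    simp only [LinearMap.comp_apply]
    rw [neg_single, cone_single, cone_single, neg_single]
    simp
  exact LinearMap.congr_fun this c

theorem bd_neg {E : Type*} [InvolutiveNeg E] (c : Chn E) :
    bdC E (negC E c) = negC E (bdC E c) := by
  have : bdC E ∘ₗ negC E = negC E ∘ₗ bdC E := by
    apply chn_ext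
    intro s
    simp only [LinearMap.comp_apply]
    rw [neg_single, bd_single, bd_single, map_multiset_sum, Multiset.map_map, Multiset.map_map]
    congr 1
    apply Multiset.map_congr rfl
    intro v hv
    simp only [Function.comp]
    rw [neg_single, Multiset.map_erase _ neg_injective]
  exact LinearMap.congr_fun this c

/-- support condition -/
abbrev supC {E : Type*} (A : Multiset E → Prop) : Submodule (ZMod 2) (Chn E) :=
  Finsupp.supported (ZMod 2) (ZMod 2) {s | A s}

theorem single_sup {E : Type*} {A : Multiset E → Prop} {s : Multiset E} (h : A s) :
    (Finsupp.single s 1 : Chn E) ∈ supC A := Finsupp.single_mem_supported _ _ h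

theorem map_sup {E M : Type*} [AddCommGroup M] [Module (ZMod 2) M]
    {A : Multiset E → Prop} (f : Chn E →ₗ[ZMod 2] M)
    (N : Submodule (ZMod 2) M) (h : ∀ s, A s → f (Finsupp.single s 1) ∈ N) {c : Chn E}
    (hc : c ∈ supC A) : f c ∈ N := by
  have : supC A ≤ N.comap f := by
    unfold supC
    rw [Finsupp.supported_eq_span_single, Submodule.span_le]
    rintro _ ⟨s, hs, rfl⟩
    exact h s hs
  exact this hc

theorem cone_sup {E : Type*} {A B : Multiset E → Prop} (x : E) (h : ∀ s, A s → B (x ::ₘ s))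
    {c : Chn E} (hc : c ∈ supC A) : coneC x c ∈ supC B :=
  map_sup _ _ (fun s hs => by rw [cone_single]; exact single_sup (h s hs)) hc

theorem negC_sup {E : Type*} [Neg E] {A B : Multiset E → Prop} (h : ∀ s, A s → B (s.map Neg.neg))
    {c : Chn E} (hc : c ∈ supC A) : negC E c ∈ supC B :=
  map_sup _ _ (fun s hs => by rw [neg_single]; exact single_sup (h s hs)) hc

theorem bd_sup {E : Type*} {A B : Multiset E → Prop} (h : ∀ s, A s → ∀ v ∈ s, B (s.erase v))
    {c : Chn E} (hc : c ∈ supC A) : bdC E c ∈ supC B := by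
  refine map_sup _ _ (fun s hs => ?_) hc
  rw [bd_single]
  apply multiset_sum_mem
  intro a ha
  rw [Multiset.mem_map] at ha
  obtain ⟨v, hv, rfl⟩ := ha
  exact single_sup (h s hs v hv)

variable {E : Type*} [NormedAddCommGroup E] [NormedSpace ℝ E]

/-- barycenter -/
def baryC (s : Multiset E) : E := (Multiset.card s : ℝ)⁻¹ • s.sum

theorem bary_neg (s : Multiset E) : baryC (s.map Neg.neg) = - baryC s := by
  unfold baryC
  rw [Multiset.card_map, Multiset.sum_map_neg, smul_neg, Multiset.map_id']

theorem bary_mem {K : Set E} (hK : Convex ℝ K) (s : Multiset E) (hs : s ≠ 0)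
    (h : ∀ v ∈ s, v ∈ K) : baryC s ∈ K := by
  induction s using Multiset.induction with
  | empty => exact absurd rfl hs
  | cons x s ih =>
    by_cases h0 : s = 0
    · subst h0
      simpa [baryC] using h
    have hb := ih h0 (fun v hv => h v (Multiset.mem_cons_of_mem hv))
    have hx := h x (Multiset.mem_cons_self x s)
    have hpos : (0 : ℝ) < Multiset.card s := by
      exact_mod_cast Multiset.card_pos.2 h0
    have := hK hx hb (a := 1 / (Multiset.card s + 1 : ℝ))
      (b := (Multiset.card s : ℝ) / (Multiset.card s + 1)) (by positivity) (by positivity)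
      (by field_simp; ring)
    convert this using 1
    unfold baryC
    rw [Multiset.sum_cons, Multiset.card_cons, smul_smul, smul_add]
    congr 2
    · push_cast; rw [one_div]
    · push_cast; field_simp

theorem sum_dist_le (v : E) (d : ℝ) (s : Multiset E) (h : ∀ w ∈ s, ‖w - v‖ ≤ d) :
    ‖s.sum - (Multiset.card s : ℝ) • v‖ ≤ Multiset.card s * d := by
  induction s using Multiset.induction with
  | empty => simp
  | cons x s ih =>
    have h1 := ih (fun w hw => h w (Multiset.mem_cons_of_mem hw))
    have h2 := h x (Multiset.mem_cons_self x s)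
    rw [Multiset.sum_cons, Multiset.card_cons]
    push_cast
    have : x + s.sum - ((Multiset.card s : ℝ) + 1) • v = (x - v) + (s.sum - (Multiset.card s : ℝ) • v) := by
      rw [add_smul, one_smul]; abel
    rw [this]
    calc _ ≤ ‖x - v‖ + _ := norm_add_le _ _
      _ ≤ _ := by linarith

theorem bary_dist (n : ℕ) (s : Multiset E) (hn : Multiset.card s ≤ n + 1) (d : ℝ)
    (h : ∀ v ∈ s, ∀ w ∈ s, ‖v - w‖ ≤ d) (v : E) (hv : v ∈ s) :
    ‖baryC s - v‖ ≤ (n : ℝ) / (n + 1) * d := by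
  obtain ⟨t, rfl⟩ := Multiset.exists_cons_of_mem hv
  have hd : 0 ≤ d := le_trans (norm_nonneg _) (h v hv v hv)
  have h1 := sum_dist_le v d t (fun w hw => h w (Multiset.mem_cons_of_mem hw) v hv)
  have h2 : baryC (v ::ₘ t) - v = ((Multiset.card t : ℝ) + 1)⁻¹ • (t.sum - (Multiset.card t : ℝ) • v) := by
    unfold baryC
    rw [Multiset.sum_cons, Multiset.card_cons]
    push_cast
    have h3 : ((Multiset.card t : ℝ) + 1) ≠ 0 := by positivity
    have h4 : v = ((Multiset.card t : ℝ) + 1)⁻¹ • (((Multiset.card t : ℝ) + 1) • v) := by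
      rw [smul_smul, inv_mul_cancel₀ h3, one_smul]
    nth_rw 2 [h4]
    rw [← smul_sub]
    congr 1
    rw [add_smul, one_smul]; abel
  rw [h2, norm_smul, norm_inv, Real.norm_of_nonneg (by positivity)]
  rw [Multiset.card_cons] at hn
  have hcn : (Multiset.card t : ℝ) ≤ n := by exact_mod_cast (by omega : Multiset.card t ≤ n)
  calc ((Multiset.card t : ℝ) + 1)⁻¹ * ‖t.sum - (Multiset.card t : ℝ) • v‖
      ≤ ((Multiset.card t : ℝ) + 1)⁻¹ * (Multiset.card t * d) := by gcongr
    _ = ((Multiset.card t : ℝ) / (Multiset.card t + 1)) * d := by ring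
    _ ≤ _ := by
      gcongr ?_ * d
      rw [div_le_div_iff₀ (by positivity) (by positivity)]
      nlinarith

/-- subdivision -/
def SdC (E : Type*) [NormedAddCommGroup E] [NormedSpace ℝ E] : ℕ → (Chn E →ₗ[ZMod 2] Chn E)
  | 0 => LinearMap.id
  | k + 1 => Finsupp.linearCombination (ZMod 2)
      (fun s => coneC (baryC s) (SdC E k (bdC E (Finsupp.single s 1))))

theorem Sd_succ_single (k : ℕ) (s : Multiset E) : SdC E (k + 1) (Finsupp.single s 1) =
    coneC (baryC s) (SdC E k (bdC E (Finsupp.single s 1))) := by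
  simp only [SdC]; exact lc_single _ _

theorem bd_Sd (k : ℕ) (c : Chn E) : bdC E (SdC E (k + 1) c) = SdC E k (bdC E c) := by
  have : ∀ k, bdC E ∘ₗ SdC E (k + 1) = SdC E k ∘ₗ bdC E := by
    intro k
    induction k with
    | zero =>
      apply chn_ext
      intro s
      simp only [LinearMap.comp_apply]
      rw [Sd_succ_single, bd_cone]
      simp [SdC, bd_bd]
    | succ k ih =>
      apply chn_ext
      intro s
      simp only [LinearMap.comp_apply]
      rw [Sd_succ_single, bd_cone]
      have := LinearMap.congr_fun ih (bdC E (Finsupp.single s 1))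
      simp only [LinearMap.comp_apply] at this
      rw [this, bd_bd, map_zero, map_zero, add_zero]
  exact LinearMap.congr_fun (this k) c

theorem neg_Sd (k : ℕ) (c : Chn E) : negC E (SdC E k c) = SdC E k (negC E c) := by
  have : ∀ k, negC E ∘ₗ SdC E k = SdC E k ∘ₗ negC E := by
    intro k
    induction k with
    | zero => ext; simp [SdC]
    | succ k ih =>
      apply chn_ext
      intro s
      simp only [LinearMap.comp_apply]
      rw [Sd_succ_single, neg_cone, neg_single, Sd_succ_single, bary_neg]
      have := LinearMap.congr_fun ih (bdC E (Finsupp.single s 1))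
      simp only [LinearMap.comp_apply] at this
      rw [this, ← bd_neg, neg_single]
  exact LinearMap.congr_fun (this k) c

/-- simplices with a given number of vertices, inside K, with small diameter -/
def smpl (k : ℕ) (K : Set E) (d : ℝ) (s : Multiset E) : Prop :=
  Multiset.card s = k ∧ (∀ v ∈ s, v ∈ K) ∧ ∀ v ∈ s, ∀ w ∈ s, ‖v - w‖ ≤ d

theorem Sd_smpl (n k : ℕ) (hk : k ≤ n + 1) {K : Set E} (hK : Convex ℝ K) (d : ℝ)
    (s : Multiset E) (hs : smpl k K d s) :
    SdC E k (Finsupp.single s 1) ∈ supC (smpl k K ((n : ℝ) / (n + 1) * d)) := by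
  induction k generalizing K s with
  | zero =>
    have : s = 0 := Multiset.card_eq_zero.1 hs.1
    subst this
    simp only [SdC, LinearMap.id_apply]
    apply single_sup
    simp [smpl]
  | succ k ih =>
    obtain ⟨h1, h2, h3⟩ := hs
    have hs0 : s ≠ 0 := by rintro rfl; simp at h1
    have hd : 0 ≤ d := by
      obtain ⟨v, hv⟩ := Multiset.exists_mem_of_ne_zero hs0
      exact le_trans (norm_nonneg _) (h3 v hv v hv)
    rw [Sd_succ_single]
    have hK' : Convex ℝ (K ∩ Metric.closedBall (baryC s) ((n : ℝ) / (n + 1) * d)) :=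
      hK.inter (convex_closedBall _ _)
    have hb := bary_mem hK s hs0 h2
    have hbd := bary_dist n s (by omega) d h3
    have key : SdC E k (bdC E (Finsupp.single s 1)) ∈
        supC (smpl k (K ∩ Metric.closedBall (baryC s) ((n : ℝ) / (n + 1) * d))
          ((n : ℝ) / (n + 1) * d)) := by
      rw [bd_single, map_multiset_sum]
      apply multiset_sum_mem
      intro a ha
      rw [Multiset.map_map, Multiset.mem_map] at ha
      obtain ⟨v, hv, rfl⟩ := ha
      apply ih (by omega) hK'
      refine ⟨?_, ?_, ?_⟩
      · rw [Multiset.card_erase_of_mem hv, h1]; rfl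
      · intro w hw
        have hw' := Multiset.mem_of_mem_erase hw
        refine ⟨h2 w hw', ?_⟩
        rw [Metric.mem_closedBall, dist_comm, dist_eq_norm]
        exact hbd w hw'
      · intro w hw w' hw'
        exact h3 w (Multiset.mem_of_mem_erase hw) w' (Multiset.mem_of_mem_erase hw')
    refine cone_sup _ ?_ key
    rintro t ⟨g1, g2, g3⟩
    have g4 : ∀ w ∈ t, ‖w - baryC s‖ ≤ (n : ℝ) / (n + 1) * d := by
      intro w hw
      have := (g2 w hw).2
      rwa [Metric.mem_closedBall, dist_eq_norm] at this
    refine ⟨by simp [g1], ?_, ?_⟩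
    · intro v hv
      rcases Multiset.mem_cons.1 hv with rfl | hv
      · exact hb
      · exact (g2 v hv).1
    · intro v hv w hw
      rcases Multiset.mem_cons.1 hv with rfl | hv <;> rcases Multiset.mem_cons.1 hw with rfl | hw
      · simp; positivity
      · rw [norm_sub_rev]; exact g4 w hw
      · exact g4 v hv
      · exact g3 v hv w hw

/-- iterated subdivision -/
def SdI (E : Type*) [NormedAddCommGroup E] [NormedSpace ℝ E] (k : ℕ) :
    ℕ → (Chn E →ₗ[ZMod 2] Chn E)
  | 0 => LinearMap.id
  | N + 1 => SdC E k ∘ₗ SdI E k N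

theorem bd_SdI (k N : ℕ) (c : Chn E) : bdC E (SdI E (k + 1) N c) = SdI E k N (bdC E c) := by
  induction N with
  | zero => rfl
  | succ N ih =>
    simp only [SdI, LinearMap.comp_apply]
    rw [bd_Sd, ih]

theorem neg_SdI (k N : ℕ) (c : Chn E) : negC E (SdI E k N c) = SdI E k N (negC E c) := by
  induction N with
  | zero => rfl
  | succ N ih =>
    simp only [SdI, LinearMap.comp_apply]
    rw [neg_Sd, ih]

theorem SdI_smpl (n k : ℕ) (hk : k ≤ n + 1) (F : Set (Set E)) (hF : ∀ K ∈ F, Convex ℝ K) (d : ℝ)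
    (c : Chn E) (hc : c ∈ supC (fun s => ∃ K ∈ F, smpl k K d s)) (N : ℕ) :
    SdI E k N c ∈ supC (fun s => ∃ K ∈ F, smpl k K (((n : ℝ) / (n + 1)) ^ N * d) s) := by
  induction N with
  | zero => simpa [SdI] using hc
  | succ N ih =>
    simp only [SdI, LinearMap.comp_apply]
    refine map_sup _ _ ?_ ih
    rintro s ⟨K, hK, hs⟩
    have := Sd_smpl n k hk (hF K hK) _ s hs
    refine Finsupp.supported_mono ?_ this
    intro t ht
    refine ⟨K, hK, ?_⟩
    rw [pow_succ']
    rw [mul_assoc]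
    exact ht

end Chains

section Fan
open scoped Classical

/-- cochain on simplices -/
def ThC {E ι : Type*} (O : E → Prop) (lab : E → ι × Bool) (Λ : List ι) (s : Multiset E) : ZMod 2 :=
  if Multiset.card (s.filter O) = 1 then fanC Λ ((s.filter (fun x => ¬ O x)).map lab) else 0

theorem ThC_add {E ι : Type*} (O : E → Prop) (lab : E → ι × Bool) (Λ : List ι) (A t : Multiset E)
    (hA : ∀ x ∈ A, O x) (ht : ∀ x ∈ t, ¬ O x) :
    ThC O lab Λ (A + t) = if Multiset.card A = 1 then fanC Λ (t.map lab) else 0 := by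
  unfold ThC
  rw [Multiset.filter_add, Multiset.filter_add, Multiset.filter_eq_self.2 hA,
    Multiset.filter_eq_nil.2 ht, Multiset.filter_eq_self.2 ht,
    Multiset.filter_eq_nil.2 (fun x hx => not_not.2 (hA x hx)), add_zero, zero_add]

theorem ThC_delta {E ι : Type*} [InvolutiveNeg E] (O : E → Prop) (lab : E → ι × Bool) (Λ : List ι)
    (hO : ∀ x, O x → O (-x)) (s : Multiset E)
    (h1 : ∀ x ∈ s, ∀ o ∈ s, ¬ O x → O o → (lab x).1 ∈ Λ ∧ lab (-x) = flipL (lab x))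
    (h2 : ∀ x ∈ s, ∀ y ∈ s, ∀ o ∈ s, ¬ O x → ¬ O y → O o →
      ∀ j, ¬ (lab x = (j, true) ∧ lab y = (j, false))) :
    (s.map (fun v => ThC O lab Λ (s.erase v))).sum =
      ThC O lab Λ s + ThC O lab Λ (s.map Neg.neg) := by
  obtain ⟨A, t, hA, ht, rfl⟩ : ∃ A t, (∀ x ∈ A, O x) ∧ (∀ x ∈ t, ¬ O x) ∧ s = A + t :=
    ⟨s.filter O, s.filter (fun x => ¬ O x), fun x hx => (Multiset.mem_filter.1 hx).2,
      fun x hx => (Multiset.mem_filter.1 hx).2, (Multiset.filter_add_not _ _).symm⟩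
  have hO' : ∀ x, ¬ O x → ¬ O (-x) := fun x hx h => hx (by simpa using hO _ h)
  rw [Multiset.map_add, Multiset.map_add, Multiset.sum_add, ThC_add O lab Λ A t hA ht,
    ThC_add O lab Λ (A.map Neg.neg) (t.map Neg.neg)
      (by intro x hx; rw [Multiset.mem_map] at hx; obtain ⟨y, hy, rfl⟩ := hx; exact hO _ (hA y hy))
      (by intro x hx; rw [Multiset.mem_map] at hx; obtain ⟨y, hy, rfl⟩ := hx; exact hO' _ (ht y hy)),
    Multiset.card_map]
  have e1 : A.map (fun v => ThC O lab Λ ((A + t).erase v)) =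
      A.map (fun v => if Multiset.card A = 2 then fanC Λ (t.map lab) else 0) := by
    apply Multiset.map_congr rfl
    intro v hv
    rw [Multiset.erase_add_left_pos _ hv, ThC_add O lab Λ _ t
      (fun x hx => hA x (Multiset.mem_of_mem_erase hx)) ht]
    have := Multiset.card_erase_add_one hv
    congr 1
    apply propext; constructor <;> intro h <;> omega
  have e2 : t.map (fun v => ThC O lab Λ ((A + t).erase v)) =
      t.map (fun v => if Multiset.card A = 1 then fanC Λ ((t.erase v).map lab) else 0) := by
    apply Multiset.map_congr rfl
    intro v hv
    rw [Multiset.erase_add_right_pos _ hv, ThC_add O lab Λ _ _ hA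
      (fun x hx => ht x (Multiset.mem_of_mem_erase hx))]
  rw [e1, e2, Multiset.map_const', Multiset.sum_replicate]
  have e3 : Multiset.card A • (if Multiset.card A = 2 then fanC Λ (t.map lab) else 0) = 0 := by
    split_ifs with h
    · rw [h, two_smul, zmod2_add_self]
    · simp
  rw [e3, zero_add]
  by_cases hc : Multiset.card A = 1
  · simp only [hc, if_true]
    obtain ⟨o, rfl⟩ := Multiset.card_eq_one.1 hc
    have ho : O o := hA o (by simp)
    have hos : o ∈ ({o} + t : Multiset E) := by simp
    have hts : ∀ x ∈ t, x ∈ ({o} + t : Multiset E) := fun x hx => by simp [hx]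
    have := fanC_delta Λ (t.map lab)
      (by
        intro x hx; rw [Multiset.mem_map] at hx; obtain ⟨y, hy, rfl⟩ := hx
        exact (h1 y (hts y hy) o hos (ht y hy) ho).1)
      (by
        rintro j ⟨hx, hx'⟩
        rw [Multiset.mem_map] at hx hx'
        obtain ⟨y, hy, hyj⟩ := hx
        obtain ⟨z, hz, hzj⟩ := hx'
        exact h2 y (hts y hy) z (hts z hz) o hos (ht y hy) (ht z hz) ho j ⟨hyj, hzj⟩)
    have e4 : (t.map Neg.neg).map lab = (t.map lab).map flipL := by
      rw [Multiset.map_map, Multiset.map_map]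
      apply Multiset.map_congr rfl
      intro x hx
      exact (h1 x (hts x hx) o hos (ht x hx) ho).2
    rw [e4, ← this, Multiset.map_map]
    congr 1
    apply Multiset.map_congr rfl
    intro v hv
    simp only [Function.comp]
    congr 1
    obtain ⟨t', rfl⟩ := Multiset.exists_cons_of_mem hv
    simp
  · simp [hc]

/-- vertices of the cross polytope -/
def vtx (n : ℕ) (R : ℝ) (k : ℕ) : Fin n → ℝ := fun i => if (i : ℕ) = k then R else 0

/-- coarse disks -/
def Dk (n : ℕ) (R : ℝ) : ℕ → Chn (Fin n → ℝ)
  | 0 => Finsupp.single {0} 1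
  | k + 1 => coneC (vtx n R k) (Dk n R k) + negC _ (coneC (vtx n R k) (Dk n R k))

/-- coarse spheres -/
def Sk (n : ℕ) (R : ℝ) : ℕ → Chn (Fin n → ℝ)
  | 0 => Finsupp.single 0 1
  | k + 1 => coneC (vtx n R k) (Sk n R k) + negC _ (coneC (vtx n R k) (Sk n R k))

theorem neg_Dk (n : ℕ) (R : ℝ) (k : ℕ) : negC _ (Dk n R k) = Dk n R k := by
  cases k with
  | zero => simp [Dk, neg_single]
  | succ k => simp only [Dk, map_add, neg_neg_C]; rw [add_comm]

theorem bd_Dk (n : ℕ) (R : ℝ) (k : ℕ) : bdC _ (Dk n R k) = Sk n R k := by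
  induction k with
  | zero => simp [Dk, Sk, bd_single]
  | succ k ih =>
    simp only [Dk, Sk, map_add, bd_neg, bd_cone, neg_Dk, ih]
    rw [add_add_add_comm, chn_add_self, zero_add]

theorem vtx_norm (n : ℕ) (R : ℝ) (hR : 0 ≤ R) (k : ℕ) : ‖vtx n R k‖ ≤ R := by
  rw [pi_norm_le_iff_of_nonneg hR]
  intro i
  unfold vtx
  split_ifs
  · rw [Real.norm_of_nonneg hR]
  · simpa using hR

theorem Dk_sup (n : ℕ) (R : ℝ) (hR : 0 ≤ R) (k : ℕ) :
    Dk n R k ∈ supC (fun s => Multiset.card s = k + 1 ∧ ∀ v ∈ s, ‖v‖ ≤ R) := by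
  induction k with
  | zero =>
    simp only [Dk]
    apply single_sup
    simpa using hR
  | succ k ih =>
    have h1 : coneC (vtx n R k) (Dk n R k) ∈
        supC (fun s => Multiset.card s = k + 1 + 1 ∧ ∀ v ∈ s, ‖v‖ ≤ R) := by
      refine cone_sup _ ?_ ih
      rintro s ⟨h1, h2⟩
      refine ⟨by simp [h1], ?_⟩
      intro v hv
      rcases Multiset.mem_cons.1 hv with rfl | hv
      · exact vtx_norm n R hR k
      · exact h2 v hv
    refine Submodule.add_mem _ h1 (negC_sup ?_ h1)
    rintro s ⟨h1, h2⟩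
    refine ⟨by simp [h1], ?_⟩
    intro v hv
    rw [Multiset.mem_map] at hv
    obtain ⟨w, hw, rfl⟩ := hv
    rw [norm_neg]; exact h2 w hw

/-- facet predicate -/
def facP (n : ℕ) (R : ℝ) (k : ℕ) (s : Multiset (Fin n → ℝ)) : Prop :=
  Multiset.card s = k ∧ (∀ v ∈ s, ‖v‖ ≤ R) ∧ ∃ w : Fin n → ℝ, (∀ i, |w i| ≤ 1) ∧
    ∀ v ∈ s, (∑ i, w i * v i = R) ∧ ∀ i : Fin n, k ≤ (i : ℕ) → v i = 0

theorem fac_cone (n : ℕ) (R : ℝ) (hR : 0 ≤ R) (k : ℕ) (hk : k < n) (s : Multiset (Fin n → ℝ))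
    (hs : facP n R k s) : facP n R (k + 1) (vtx n R k ::ₘ s) := by
  obtain ⟨h1, h2, w, hw, h3⟩ := hs
  refine ⟨by simp [h1], ?_, fun i => if (i : ℕ) = k then 1 else w i, ?_, ?_⟩
  · intro v hv
    rcases Multiset.mem_cons.1 hv with rfl | hv
    · exact vtx_norm n R hR k
    · exact h2 v hv
  · intro i
    dsimp only
    split_ifs
    · simp
    · exact hw i
  · intro v hv
    rcases Multiset.mem_cons.1 hv with rfl | hv
    · constructor
      · rw [Finset.sum_eq_single (⟨k, hk⟩ : Fin n)]
        · simp [vtx]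
        · intro i _ hi
          have : (i : ℕ) ≠ k := fun h => hi (Fin.ext h)
          simp [vtx, this]
        · simp
      · intro i hi
        have : (i : ℕ) ≠ k := by omega
        simp [vtx, this]
    · obtain ⟨h4, h5⟩ := h3 v hv
      constructor
      · rw [← h4]
        apply Finset.sum_congr rfl
        intro i _
        dsimp only
        split_ifs with h
        · rw [h5 i h.ge]; simp
        · rfl
      · intro i hi
        exact h5 i (by omega)

theorem fac_neg (n : ℕ) (R : ℝ) (k : ℕ) (s : Multiset (Fin n → ℝ))
    (hs : facP n R k s) : facP n R k (s.map Neg.neg) := by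
  obtain ⟨h1, h2, w, hw, h3⟩ := hs
  refine ⟨by simp [h1], ?_, fun i => - w i, ?_, ?_⟩
  · intro v hv
    rw [Multiset.mem_map] at hv
    obtain ⟨w, hw, rfl⟩ := hv
    rw [norm_neg]; exact h2 w hw
  · intro i; simpa using hw i
  · intro v hv
    rw [Multiset.mem_map] at hv
    obtain ⟨u, hu, rfl⟩ := hv
    obtain ⟨h4, h5⟩ := h3 u hu
    constructor
    · simpa using h4
    · intro i hi
      simp [h5 i hi]

theorem Sk_sup (n : ℕ) (R : ℝ) (hR : 0 ≤ R) (k : ℕ) (hk : k ≤ n) :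
    Sk n R k ∈ supC (facP n R k) := by
  induction k with
  | zero =>
    simp only [Sk]
    apply single_sup
    exact ⟨rfl, by simp, 0, by simp, by simp⟩
  | succ k ih =>
    have h1 : coneC (vtx n R k) (Sk n R k) ∈ supC (facP n R (k + 1)) :=
      cone_sup _ (fac_cone n R hR k (by omega)) (ih (by omega))
    exact Submodule.add_mem _ h1 (negC_sup (fac_neg n R (k + 1)) h1)

/-- facets -/
def facF (n : ℕ) (R : ℝ) : Set (Set (Fin n → ℝ)) :=
  {K | ∃ w : Fin n → ℝ, (∀ i, |w i| ≤ 1) ∧ K = {x | ∑ i, w i * x i = R}}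

theorem facF_convex (n : ℕ) (R : ℝ) : ∀ K ∈ facF n R, Convex ℝ K := by
  rintro K ⟨w, -, rfl⟩
  intro x hx y hy a b ha hb hab
  simp only [Set.mem_ofPred_eq] at *
  have : ∑ i, w i * (a • x + b • y) i = a * ∑ i, w i * x i + b * ∑ i, w i * y i := by
    rw [Finset.mul_sum, Finset.mul_sum, ← Finset.sum_add_distrib]
    apply Finset.sum_congr rfl
    intro i _
    simp; ring
  rw [this, hx, hy, ← add_mul, hab, one_mul]

theorem fan_theorem {ι : Type*} (n : ℕ) (R : ℝ) (hR : 0 < R) (O : (Fin n → ℝ) → Prop)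
    (h0 : O 0) (hO : ∀ x, O x → O (-x)) (hOR : ∀ x, O x → ∑ i, |x i| < R)
    (lab : (Fin n → ℝ) → ι × Bool) (Λ : List ι) (δ : ℝ) (hδ : 0 < δ)
    (h1 : ∀ x o, ¬ O x → O o → ‖x - o‖ ≤ δ → (lab x).1 ∈ Λ ∧ lab (-x) = flipL (lab x))
    (h2 : ∀ x y o, ¬ O x → ¬ O y → O o → ‖x - o‖ ≤ δ → ‖y - o‖ ≤ δ → ‖x - y‖ ≤ δ →
      ∀ j, ¬ (lab x = (j, true) ∧ lab y = (j, false))) :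
    n ≤ Λ.length := by
  obtain ⟨N, hN⟩ : ∃ N : ℕ, ((n : ℝ) / (n + 1)) ^ N * (2 * R) ≤ δ := by
    have := ((tendsto_pow_atTop_nhds_zero_of_lt_one (r := (n : ℝ) / (n + 1)) (by positivity)
      (by rw [div_lt_one (by positivity)]; linarith)).mul_const (2 * R)).eventually
      (eventually_le_nhds (by simpa using hδ))
    exact this.exists
  let Th : Chn (Fin n → ℝ) →ₗ[ZMod 2] ZMod 2 := Finsupp.linearCombination (ZMod 2) (ThC O lab Λ)
  have Th_single : ∀ s, Th (Finsupp.single s 1) = ThC O lab Λ s := fun s => lc_single _ _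
  let ρ := ((n : ℝ) / (n + 1)) ^ N * (2 * R)
  have hpair : ∀ (s : Multiset (Fin n → ℝ)), (∀ v ∈ s, ‖v‖ ≤ R) → ∀ v ∈ s, ∀ w ∈ s, ‖v - w‖ ≤ 2 * R := by
    intro s hs v hv w hw
    have := hs v hv
    have := hs w hw
    calc ‖v - w‖ ≤ ‖v‖ + ‖w‖ := norm_sub_le _ _
      _ ≤ _ := by linarith
  -- delta identity on fine chains
  have hdelta : ∀ (k : ℕ) (c : Chn (Fin n → ℝ)), c ∈ supC (fun s => ∃ K ∈ ({Set.univ} : Set (Set (Fin n → ℝ))),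
      smpl k K ρ s) → Th (bdC (Fin n → ℝ) c) = Th c + Th (negC (Fin n → ℝ) c) := by
    intro k c hc
    have : (Th ∘ₗ bdC (Fin n → ℝ) - (Th + Th ∘ₗ negC (Fin n → ℝ))) c ∈ (⊥ : Submodule (ZMod 2) (ZMod 2)) := by
      refine map_sup _ _ ?_ hc
      rintro s ⟨K, -, -, -, hs⟩
      have hs' : ∀ x ∈ s, ∀ y ∈ s, ‖x - y‖ ≤ δ := fun x hx y hy => (hs x hx y hy).trans hN
      rw [Submodule.mem_bot]
      simp only [LinearMap.sub_apply, LinearMap.comp_apply, LinearMap.add_apply]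
      rw [neg_single, Th_single, Th_single, bd_single, map_multiset_sum, Multiset.map_map]
      rw [← ThC_delta O lab Λ hO s
        (fun x hx o ho hxO hoO => h1 x o hxO hoO (hs' x hx o ho))
        (fun x hx y hy o ho hxO hyO hoO => h2 x y o hxO hyO hoO (hs' x hx o ho) (hs' y hy o ho)
          (hs' x hx y hy)), sub_eq_zero]
      congr 1
      apply Multiset.map_congr rfl
      intro v _
      exact Th_single _
    rw [Submodule.mem_bot] at this
    simp only [LinearMap.sub_apply, LinearMap.comp_apply, LinearMap.add_apply] at this
    exact sub_eq_zero.1 this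
  have hfine : ∀ k (c : Chn (Fin n → ℝ)), k ≤ n + 1 → c ∈ supC (fun s => Multiset.card s = k ∧ ∀ v ∈ s, ‖v‖ ≤ R) →
      SdI (Fin n → ℝ) k N c ∈ supC (fun s => ∃ K ∈ ({Set.univ} : Set (Set (Fin n → ℝ))), smpl k K ρ s) := by
    intro k c hk hc
    apply SdI_smpl n k hk _ (by rintro K rfl; exact convex_univ) (2 * R) c
    refine Finsupp.supported_mono ?_ hc
    rintro s ⟨g1, g2⟩
    exact ⟨Set.univ, rfl, g1, by simp, hpair s g2⟩
  have hbdry : ∀ k, k < n → Th (SdI (Fin n → ℝ) (k + 1) N (coneC (vtx n R k) (Sk n R k))) = 0 := by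
    intro k hk
    have g1 : coneC (vtx n R k) (Sk n R k) ∈ supC (facP n R (k + 1)) :=
      cone_sup _ (fac_cone n R hR.le k hk) (Sk_sup n R hR.le k hk.le)
    have g2 : coneC (vtx n R k) (Sk n R k) ∈
        supC (fun s => ∃ K ∈ facF n R, smpl (k + 1) K (2 * R) s) := by
      refine Finsupp.supported_mono ?_ g1
      rintro s ⟨f1, f2, w, hw, f3⟩
      exact ⟨_, ⟨w, hw, rfl⟩, f1, fun v hv => (f3 v hv).1, hpair s f2⟩
    have g3 := SdI_smpl n (k + 1) (by omega) (facF n R) (facF_convex n R) (2 * R) _ g2 N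
    have : Th (SdI (Fin n → ℝ) (k + 1) N (coneC (vtx n R k) (Sk n R k))) ∈
        (⊥ : Submodule (ZMod 2) (ZMod 2)) := by
      refine map_sup _ _ ?_ g3
      rintro s ⟨_, ⟨w, hw, rfl⟩, -, f2, -⟩
      rw [Submodule.mem_bot, Th_single]
      unfold ThC
      have : s.filter O = 0 := by
        apply Multiset.filter_eq_nil.2
        intro v hv hOv
        have e1 := f2 v hv
        have e2 := hOR v hOv
        simp only [Set.mem_ofPred_eq] at e1
        have e3 : ∑ i, w i * v i ≤ ∑ i, |v i| := by
          apply Finset.sum_le_sum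
          intro i _
          calc w i * v i ≤ |w i * v i| := le_abs_self _
            _ = |w i| * |v i| := abs_mul _ _
            _ ≤ 1 * |v i| := by gcongr; exact hw i
            _ = _ := one_mul _
        linarith
      rw [this]; simp
    exact (Submodule.mem_bot _).1 this
  have hmain : ∀ k, k ≤ n → Th (SdI (Fin n → ℝ) (k + 1) N (Dk n R k)) = 1 := by
    intro k
    induction k with
    | zero =>
      intro _
      have : ∀ M, SdI (Fin n → ℝ) 1 M (Finsupp.single {0} 1) = Finsupp.single {0} 1 := by
        intro M
        induction M with
        | zero => rfl
        | succ M ih =>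
          simp only [SdI, LinearMap.comp_apply]
          rw [ih, Sd_succ_single]
          simp [SdC, bd_single, cone_single, baryC]
      simp only [Dk]
      rw [this, Th_single]
      unfold ThC
      simp [h0, Multiset.filter_singleton, fanC_zero]
    | succ k ih =>
      intro hk
      have hDk := Dk_sup n R hR.le k
      have hH : coneC (vtx n R k) (Dk n R k) ∈
          supC (fun s => Multiset.card s = k + 1 + 1 ∧ ∀ v ∈ s, ‖v‖ ≤ R) := by
        refine cone_sup _ ?_ hDk
        rintro s ⟨h1, h2⟩
        refine ⟨by simp [h1], ?_⟩
        intro v hv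
        rcases Multiset.mem_cons.1 hv with rfl | hv
        · exact vtx_norm n R hR.le k
        · exact h2 v hv
      have e1 := hdelta _ _ (hfine (k + 1 + 1) _ (by omega) hH)
      rw [bd_SdI, bd_cone, bd_Dk, map_add, map_add, hbdry k (by omega), ih (by omega), add_zero,
        neg_SdI, ← map_add, ← map_add] at e1
      simp only [Dk]
      exact e1.symm
  have hfin := hmain n le_rfl
  by_contra hlt
  push Not at hlt
  have hz : Th (SdI (Fin n → ℝ) (n + 1) N (Dk n R n)) ∈ (⊥ : Submodule (ZMod 2) (ZMod 2)) := by
    refine map_sup _ _ ?_ (hfine (n + 1) _ le_rfl (Dk_sup n R hR.le n))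
    rintro s ⟨K, -, f1, -, -⟩
    rw [Submodule.mem_bot, Th_single]
    unfold ThC
    split_ifs with hc
    · by_contra hne
      have e1 := fanC_card _ _ hne
      rw [Multiset.card_map] at e1
      have e2 : Multiset.card (s.filter O) + Multiset.card (s.filter (fun x => ¬ O x)) = n + 1 := by
        rw [← Multiset.card_add, Multiset.filter_add_not, f1]
      omega
    · rfl
  rw [Submodule.mem_bot, hfin] at hz
  exact one_ne_zero hz

end Fan

theorem ekeland_weak {F : Type*} [MetricSpace F] [CompleteSpace F] [Nonempty F] (f : F → ℝ)
    (B : ℝ) (hB : ∀ x, B ≤ f x)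
    (hl : ∀ (u : ℕ → F) (x : F) (c : ℕ → ℝ) (d : ℝ), Tendsto u atTop (𝓝 x) →
      Tendsto c atTop (𝓝 d) → (∀ᶠ n in atTop, f (u n) ≤ c n) → f x ≤ d)
    (s : ℝ) (hs : 0 < s) : ∃ g, ∀ g', f g ≤ f g' + s * dist g g' := by
  have step : ∀ (x : F) (k : ℕ), ∃ y, f y + s * dist x y ≤ f x ∧
      ∀ z, f z + s * dist x z ≤ f x → f y ≤ f z + (1 / 2) ^ k := by
    intro x k
    set A := f '' {z | f z + s * dist x z ≤ f x} with hA
    have hne : A.Nonempty := ⟨f x, x, by simp, rfl⟩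
    have hbd : BddBelow A := ⟨B, by rintro _ ⟨z, -, rfl⟩; exact hB z⟩
    obtain ⟨_, ⟨y, hy, rfl⟩, hy2⟩ := exists_lt_of_csInf_lt hne
      (show sInf A < sInf A + (1 / 2) ^ k by linarith [show (0:ℝ) < (1 / 2) ^ k by positivity])
    refine ⟨y, hy, fun z hz => ?_⟩
    have := csInf_le hbd ⟨z, hz, rfl⟩
    linarith
  choose nx hnx1 hnx2 using step
  obtain ⟨x0⟩ := ‹Nonempty F›
  let u : ℕ → F := fun n => Nat.rec x0 (fun k x => nx x k) n
  have hu : ∀ k, u (k + 1) = nx (u k) k := fun k => rfl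
  have hstep : ∀ k, f (u (k + 1)) + s * dist (u k) (u (k + 1)) ≤ f (u k) := by
    intro k; rw [hu]; exact hnx1 _ _
  have hnest : ∀ k l, k ≤ l → f (u l) + s * dist (u k) (u l) ≤ f (u k) := by
    intro k l hkl
    induction l, hkl using Nat.le_induction with
    | base => simp
    | succ l hl ih =>
      have := hstep l
      have h3 := dist_triangle (u k) (u l) (u (l + 1))
      nlinarith
  have hanti : Antitone (fun k => f (u k)) := antitone_nat_of_succ_le (fun k => by
    have := hstep k
    have : 0 ≤ s * dist (u k) (u (k + 1)) := by positivity
    linarith)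
  have hconv : Tendsto (fun k => f (u k)) atTop (𝓝 (⨅ k, f (u k))) :=
    tendsto_atTop_ciInf hanti ⟨B, by rintro _ ⟨k, rfl⟩; exact hB _⟩
  set ℓ := ⨅ k, f (u k) with hℓ
  have hge : ∀ k, ℓ ≤ f (u k) := fun k => hanti.le_of_tendsto hconv k
  have hcau : CauchySeq u := by
    rw [Metric.cauchySeq_iff']
    intro ε hε
    have : ∀ᶠ k in atTop, f (u k) < ℓ + s * ε :=
      hconv.eventually (gt_mem_nhds (by linarith [mul_pos hs hε]))
    obtain ⟨N, hN⟩ := this.exists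
    refine ⟨N, fun n hn => ?_⟩
    have h1 := hnest N n hn
    have h2 := hge n
    have : s * dist (u N) (u n) < s * ε := by linarith
    rw [dist_comm]
    exact lt_of_mul_lt_mul_left this hs.le
  obtain ⟨x, hx⟩ := cauchySeq_tendsto_of_complete hcau
  have hxn : ∀ k, f x + s * dist (u k) x ≤ f (u k) := by
    intro k
    have := hl u x (fun n => f (u k) - s * dist (u k) (u n)) (f (u k) - s * dist (u k) x) hx
      (tendsto_const_nhds.sub ((tendsto_const_nhds.dist hx).const_mul s))
      (by
        filter_upwards [eventually_ge_atTop k] with n hn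
        have := hnest k n hn
        linarith)
    linarith
  refine ⟨x, fun g' => ?_⟩
  by_contra hlt
  push Not at hlt
  have hg : ∀ k, f g' + s * dist (u k) g' ≤ f (u k) := by
    intro k
    have h1 := hxn k
    have h3 := dist_triangle (u k) x g'
    nlinarith
  have h5 : ∀ k, f (u (k + 1)) ≤ f g' + (1 / 2) ^ k := by
    intro k; rw [hu]; exact hnx2 _ _ _ (hg k)
  have h6 : f x ≤ f g' + 0 := by
    refine hl (fun k => u (k + 1)) x (fun k => f g' + (1 / 2) ^ k) _ (hx.comp (tendsto_add_atTop_nat 1))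
      (tendsto_const_nhds.add (tendsto_pow_atTop_nhds_zero_of_lt_one (by norm_num) (by norm_num)))
      (Eventually.of_forall h5)
  have : 0 ≤ s * dist x g' := by positivity
  linarith

section Deform

variable {P : Type*} [NormedAddCommGroup P] [InnerProductSpace ℝ P] [CompleteSpace P]

theorem fderiv_even_odd {φ : P → ℝ} (hφ : ContDiff ℝ 1 φ) (he : ∀ p, φ (-p) = φ p) (p : P) :
    fderiv ℝ φ (-p) = - fderiv ℝ φ p := by
  have hd : Differentiable ℝ φ := hφ.differentiable (by norm_num)
  have h1 : HasFDerivAt (fun q : P => φ (-q)) ((fderiv ℝ φ (-p)).comp (-ContinuousLinearMap.id ℝ P)) p :=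
    HasFDerivAt.comp p (hd (-p)).hasFDerivAt (hasFDerivAt_id p).neg
  have h2 : (fun q : P => φ (-q)) = φ := funext he
  rw [h2] at h1
  have h3 := h1.unique (hd p).hasFDerivAt
  ext v
  rw [← h3]; simp

/-- normalized gradient -/
def gradV (φ : P → ℝ) (ν : ℝ) (p : P) : P :=
  (max ‖fderiv ℝ φ p‖ ν)⁻¹ • (InnerProductSpace.toDual ℝ P).symm (fderiv ℝ φ p)

theorem gradV_cont {φ : P → ℝ} (hφ : ContDiff ℝ 1 φ) {ν : ℝ} (hν : 0 < ν) :
    Continuous (gradV φ ν) := by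
  have hc : Continuous (fderiv ℝ φ) := hφ.continuous_fderiv (by norm_num)
  unfold gradV
  refine Continuous.smul (Continuous.inv₀ (hc.norm.max continuous_const) ?_) ?_
  · intro x
    exact (lt_max_of_lt_right hν).ne'
  · exact (InnerProductSpace.toDual ℝ P).symm.continuous.comp hc

theorem gradV_norm {φ : P → ℝ} {ν : ℝ} (hν : 0 < ν) (p : P) : ‖gradV φ ν p‖ ≤ 1 := by
  unfold gradV
  have : 0 < max ‖fderiv ℝ φ p‖ ν := lt_max_of_lt_right hν
  rw [norm_smul, LinearIsometryEquiv.norm_map, norm_inv, Real.norm_of_nonneg this.le,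
    inv_mul_le_iff₀ this, mul_one]
  exact le_max_left _ _

theorem gradV_odd {φ : P → ℝ} (hφ : ContDiff ℝ 1 φ) (he : ∀ p, φ (-p) = φ p) (ν : ℝ) (p : P) :
    gradV φ ν (-p) = - gradV φ ν p := by
  unfold gradV
  rw [fderiv_even_odd hφ he, norm_neg, map_neg, smul_neg]

theorem gradV_apply {φ : P → ℝ} {ν : ℝ} (hν : 0 < ν) (p : P) (h : ν ≤ ‖fderiv ℝ φ p‖) :
    fderiv ℝ φ p (gradV φ ν p) = ‖fderiv ℝ φ p‖ := by
  unfold gradV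
  rw [max_eq_left h, map_smul]
  have : fderiv ℝ φ p ((InnerProductSpace.toDual ℝ P).symm (fderiv ℝ φ p)) = ‖fderiv ℝ φ p‖ ^ 2 := by
    rw [← InnerProductSpace.toDual_symm_apply, real_inner_self_eq_norm_sq,
      LinearIsometryEquiv.norm_map]
  rw [this, smul_eq_mul]
  have : ‖fderiv ℝ φ p‖ ≠ 0 := by linarith [hν, h] |> ne_of_gt
  field_simp

theorem unif_taylor {φ : P → ℝ} (hφ : ContDiff ℝ 1 φ) (K : Set P) (hK : IsCompact K) (η : ℝ)
    (hη : 0 < η) : ∃ t0 > 0, ∀ y ∈ K, ∀ z, ‖z - y‖ < t0 →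
      φ z - φ y - fderiv ℝ φ y (z - y) ≤ η * ‖z - y‖ := by
  have hc : Continuous (fderiv ℝ φ) := hφ.continuous_fderiv (by norm_num)
  have hd : Differentiable ℝ φ := hφ.differentiable (by norm_num)
  have := hK.uniformContinuousAt_of_continuousAt (fderiv ℝ φ) (fun a _ => hc.continuousAt)
    (Metric.dist_mem_uniformity hη)
  obtain ⟨t0, ht0, h⟩ := Metric.mem_uniformity_dist.1 this
  refine ⟨t0, ht0, fun y hy z hz => ?_⟩
  have h2 := (convex_ball y t0).norm_image_sub_le_of_norm_hasFDerivWithin_le' (f := φ)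
    (f' := fderiv ℝ φ) (φ := fderiv ℝ φ y) (C := η) (x := y) (y := z)
    (fun x _ => (hd x).hasFDerivAt.hasFDerivWithinAt)
    (fun x hx => by
      have := h (a := y) (b := x) (by rw [dist_comm]; exact hx) hy
      simp only [Set.mem_ofPred_eq] at this
      rw [← dist_eq_norm, dist_comm]
      exact this.le)
    (Metric.mem_ball_self ht0) (by rwa [Metric.mem_ball, dist_eq_norm])
  exact (le_abs_self _).trans h2

theorem deform {φ : P → ℝ} (hφ : ContDiff ℝ 1 φ) (he : ∀ p, φ (-p) = φ p)
    {X : Type*} [TopologicalSpace X] [CompactSpace X] (σ : X → X) (h0 : C(X, P))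
    (hodd : ∀ x, h0 (σ x) = - h0 x) (c ε κ ν : ℝ) (hε : 0 < ε) (hκ : 0 < κ) (hν : 0 < ν)
    (hle : ∀ x, φ (h0 x) ≤ c + ε) (e : X → P → ℝ) (hec : ∀ x, Continuous (e x))
    (he0 : ∀ x y, 0 ≤ e x y) (hes : ∀ x, e x (h0 x) = 0)
    (heL : ∀ x y y', c - ε ≤ φ y → φ y ≤ c + ε → ‖y' - y‖ ≤ κ →
      e x y' - e x y ≤ 1 / 2 * ‖fderiv ℝ φ y‖ * ‖y' - y‖)
    (heν : ∀ x y, c - ε < φ (h0 x) → c - ε ≤ φ y → φ y ≤ c + ε → e x y ≤ 2 * ε →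
      ν ≤ ‖fderiv ℝ φ y‖) :
    ∃ g : C(X, P), (∀ x, g (σ x) = - g x) ∧ (∀ x, φ (h0 x) ≤ c - ε → g x = h0 x) ∧
      ∀ x, φ (g x) ≤ c - ε / 4 := by
  by_contra hcon
  push Not at hcon
  have hcφ : Continuous φ := hφ.continuous
  let F : Set C(X, P) := {g | (∀ x, g (σ x) = - g x) ∧ (∀ x, φ (h0 x) ≤ c - ε → g x = h0 x) ∧
    ∀ x, φ (g x) ≤ c - ε ∨ φ (g x) + e x (g x) ≤ φ (h0 x)}
  have hFc : IsClosed F := by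
    have hev : ∀ x : X, Continuous (fun g : C(X, P) => g x) := fun x =>
      continuous_eval_const x
    refine IsClosed.inter ?_ (IsClosed.inter ?_ ?_)
    · have : {g : C(X, P) | ∀ x, g (σ x) = - g x} = ⋂ x, {g : C(X, P) | g (σ x) = - g x} := by
        ext; simp
      show IsClosed {g : C(X, P) | ∀ x, g (σ x) = - g x}
      rw [this]
      exact isClosed_iInter fun x => isClosed_eq (hev _) (hev _).neg
    · have : {g : C(X, P) | ∀ x, φ (h0 x) ≤ c - ε → g x = h0 x} =
          ⋂ x, ⋂ (_ : φ (h0 x) ≤ c - ε), {g : C(X, P) | g x = h0 x} := by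
        ext; simp
      show IsClosed {g : C(X, P) | ∀ x, φ (h0 x) ≤ c - ε → g x = h0 x}
      rw [this]
      exact isClosed_iInter fun x => isClosed_iInter fun _ => isClosed_eq (hev _) continuous_const
    · have : {g : C(X, P) | ∀ x, φ (g x) ≤ c - ε ∨ φ (g x) + e x (g x) ≤ φ (h0 x)} =
          ⋂ x, ({g : C(X, P) | φ (g x) ≤ c - ε} ∪ {g : C(X, P) | φ (g x) + e x (g x) ≤ φ (h0 x)}) := by
        ext; simp
      show IsClosed {g : C(X, P) | ∀ x, φ (g x) ≤ c - ε ∨ φ (g x) + e x (g x) ≤ φ (h0 x)}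
      rw [this]
      refine isClosed_iInter fun x => IsClosed.union ?_ ?_
      · exact isClosed_le (hcφ.comp (hev x)) continuous_const
      · exact isClosed_le ((hcφ.comp (hev x)).add ((hec x).comp (hev x))) continuous_const
  have : CompleteSpace F := hFc.completeSpace_coe
  have hmem0 : h0 ∈ F := ⟨hodd, fun _ _ => rfl, fun x => Or.inr (by rw [hes]; simp)⟩
  have : Nonempty F := ⟨⟨h0, hmem0⟩⟩
  have hup : ∀ g ∈ F, ∀ x, φ (g x) ≤ c + ε := by
    rintro g ⟨-, -, h3⟩ x
    rcases h3 x with h | h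
    · linarith
    · linarith [hle x, he0 x (g x)]
  have hbdd : ∀ g ∈ F, BddAbove (Set.range fun x => φ (g x)) := fun g hg =>
    ⟨c + ε, by rintro _ ⟨x, rfl⟩; exact hup g hg x⟩
  let L : F → ℝ := fun g => ⨆ x, φ (g.1 x)
  have hLle : ∀ (g : F) x, φ (g.1 x) ≤ L g := fun g x => le_ciSup (hbdd g.1 g.2) x
  have hLow : ∀ g : F, c - ε / 4 ≤ L g := by
    intro g
    obtain ⟨x, hx⟩ := hcon g.1 g.2.1 g.2.2.1
    exact hx.le.trans (hLle g x)
  have : Nonempty X := by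
    obtain ⟨x, hx⟩ := hcon h0 hodd (fun _ _ => rfl)
    exact ⟨x⟩
  obtain ⟨g, hg⟩ := ekeland_weak L _ hLow (by
    intro u g b d hu hb hub
    apply ciSup_le
    intro x
    have : Tendsto (fun n => φ ((u n).1 x)) atTop (𝓝 (φ (g.1 x))) := by
      have h1 : Tendsto (fun n => (u n).1) atTop (𝓝 g.1) :=
        (continuous_subtype_val.tendsto g).comp hu
      exact (hcφ.tendsto _).comp (((continuous_eval_const x).tendsto g.1).comp h1)
    refine le_of_tendsto_of_tendsto this hb ?_
    filter_upwards [hub] with n hn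
    exact (hLle (u n) x).trans hn) (ν / 4) (by positivity)
  obtain ⟨t0, ht0, hT⟩ := unif_taylor hφ (Set.range g.1) (isCompact_range g.1.continuous) (ν / 4)
    (by positivity)
  set t := min (t0 / 2) (min κ (ε / (3 * ν))) with ht
  have htpos : 0 < t := by positivity
  have htt0 : t < t0 := lt_of_le_of_lt (min_le_left _ _) (by linarith)
  have htκ : t ≤ κ := (min_le_right _ _).trans (min_le_left _ _)
  have htε : t * ν ≤ ε / 3 := by
    have : t ≤ ε / (3 * ν) := (min_le_right _ _).trans (min_le_right _ _)
    calc t * ν ≤ ε / (3 * ν) * ν := by gcongr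
      _ = ε / 3 := by field_simp
  -- cutoff
  let χ : ℝ → ℝ := fun y => max 0 (min 1 ((y - (c - 3 * ε / 4)) / (ε / 4)))
  have hχc : Continuous χ := by fun_prop
  have hχ0 : ∀ y, 0 ≤ χ y := fun y => le_max_left _ _
  have hχ1 : ∀ y, χ y ≤ 1 := fun y => max_le zero_le_one (min_le_left _ _)
  have hχz : ∀ y, y ≤ c - 3 * ε / 4 → χ y = 0 := by
    intro y hy
    refine max_eq_left ((min_le_right _ _).trans ?_)
    exact div_nonpos_of_nonpos_of_nonneg (by linarith) (by positivity)
  have hχo : ∀ y, c - ε / 2 ≤ y → χ y = 1 := by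
    intro y hy
    have : 1 ≤ (y - (c - 3 * ε / 4)) / (ε / 4) := by
      rw [le_div_iff₀ (by positivity)]; linarith
    simp only [χ]
    rw [min_eq_left this]; simp
  let g' : C(X, P) := ⟨fun x => g.1 x - (t * χ (φ (g.1 x))) • gradV φ ν (g.1 x), by
    have h1 : Continuous (fun x => g.1 x) := g.1.continuous
    exact h1.sub ((continuous_const.mul (hχc.comp (hcφ.comp h1))).smul
      ((gradV_cont hφ hν).comp h1))⟩
  have hg' : ∀ x, g' x = g.1 x - (t * χ (φ (g.1 x))) • gradV φ ν (g.1 x) := fun x => rfl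
  -- basic facts at active points
  have hact : ∀ x, c - 3 * ε / 4 < φ (g.1 x) → c - ε < φ (h0 x) ∧
      φ (g.1 x) + e x (g.1 x) ≤ φ (h0 x) ∧ ν ≤ ‖fderiv ℝ φ (g.1 x)‖ := by
    intro x hx
    have h1 : c - ε < φ (h0 x) := by
      by_contra h
      push Not at h
      rw [g.2.2.1 x h] at hx
      linarith
    have h2 := (g.2.2.2 x).resolve_left (by push Not; linarith)
    refine ⟨h1, h2, heν x _ h1 (by linarith) (hup _ g.2 x) ?_⟩
    linarith [hle x]
  have hdist : ∀ x, ‖g' x - g.1 x‖ ≤ t * χ (φ (g.1 x)) := by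
    intro x
    rw [hg', sub_sub_cancel_left, norm_neg, norm_smul, Real.norm_of_nonneg
      (mul_nonneg htpos.le (hχ0 _))]
    have := gradV_norm (φ := φ) hν (g.1 x)
    have h2 : 0 ≤ t * χ (φ (g.1 x)) := mul_nonneg htpos.le (hχ0 _)
    nlinarith
  have hdistt : ∀ x, ‖g' x - g.1 x‖ ≤ t := fun x =>
    (hdist x).trans (by nlinarith [hχ1 (φ (g.1 x))])
  have hdec : ∀ x, c - 3 * ε / 4 < φ (g.1 x) →
      φ (g' x) ≤ φ (g.1 x) - 3 / 4 * (t * χ (φ (g.1 x))) * ‖fderiv ℝ φ (g.1 x)‖ := by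
    intro x hx
    obtain ⟨-, -, h3⟩ := hact x hx
    have h4 := hT (g.1 x) ⟨x, rfl⟩ (g' x) (lt_of_le_of_lt (hdistt x) htt0)
    have h5 : fderiv ℝ φ (g.1 x) (g' x - g.1 x) = - (t * χ (φ (g.1 x))) * ‖fderiv ℝ φ (g.1 x)‖ := by
      rw [hg', sub_sub_cancel_left, map_neg, map_smul, gradV_apply hν _ h3, smul_eq_mul]; ring
    rw [h5] at h4
    have h6 := hdist x
    have h7 : 0 ≤ t * χ (φ (g.1 x)) := mul_nonneg htpos.le (hχ0 _)
    have h8 : ν / 4 * ‖g' x - g.1 x‖ ≤ 1 / 4 * (t * χ (φ (g.1 x))) * ‖fderiv ℝ φ (g.1 x)‖ := by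
      calc ν / 4 * ‖g' x - g.1 x‖ ≤ ν / 4 * (t * χ (φ (g.1 x))) := by gcongr
        _ = 1 / 4 * (t * χ (φ (g.1 x))) * ν := by ring
        _ ≤ _ := by gcongr
    linarith
  have hinact : ∀ x, φ (g.1 x) ≤ c - 3 * ε / 4 → g' x = g.1 x := by
    intro x hx
    rw [hg', hχz _ hx]; simp
  have hg'F : g' ∈ F := by
    refine ⟨?_, ?_, ?_⟩
    · intro x
      rw [hg', hg', g.2.1 x, he, gradV_odd hφ he, smul_neg]; abel
    · intro x hx
      rw [hinact x, g.2.2.1 x hx]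
      rw [g.2.2.1 x hx]; linarith
    · intro x
      by_cases hx : φ (g.1 x) ≤ c - 3 * ε / 4
      · rw [hinact x hx]; exact g.2.2.2 x
      · push Not at hx
        right
        obtain ⟨h1, h2, h3⟩ := hact x hx
        have h4 := heL x (g.1 x) (g' x) (by linarith) (hup _ g.2 x) ((hdistt x).trans htκ)
        have h5 := hdec x hx
        have h7 : 0 ≤ t * χ (φ (g.1 x)) := mul_nonneg htpos.le (hχ0 _)
        have h8 : 1 / 2 * ‖fderiv ℝ φ (g.1 x)‖ * ‖g' x - g.1 x‖ ≤
            1 / 2 * ‖fderiv ℝ φ (g.1 x)‖ * (t * χ (φ (g.1 x))) := by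
          gcongr; exact hdist x
        have h9 : 0 ≤ (t * χ (φ (g.1 x))) * ‖fderiv ℝ φ (g.1 x)‖ := by positivity
        linarith
  have hfin := hg ⟨g', hg'F⟩
  have hd : dist g ⟨g', hg'F⟩ ≤ t := by
    rw [Subtype.dist_eq, ContinuousMap.dist_le htpos.le]
    intro x
    rw [dist_comm, dist_eq_norm]
    exact hdistt x
  have hL' : L ⟨g', hg'F⟩ ≤ L g - 3 / 4 * t * ν := by
    apply ciSup_le
    intro x
    show φ (g' x) ≤ _
    have hlow := hLow g
    by_cases hx : φ (g.1 x) ≤ c - 3 * ε / 4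
    · rw [hinact x hx]; nlinarith
    · push Not at hx
      have h5 := hdec x hx
      obtain ⟨h1, h2, h3⟩ := hact x hx
      have h7 : 0 ≤ t * χ (φ (g.1 x)) := mul_nonneg htpos.le (hχ0 _)
      by_cases hx2 : φ (g.1 x) ≤ c - ε / 2
      · have h9 : 0 ≤ (t * χ (φ (g.1 x))) * ‖fderiv ℝ φ (g.1 x)‖ := by positivity
        nlinarith
      · push Not at hx2
        rw [hχo _ hx2.le] at h5
        have := hLle g x
        have h10 : 3 / 4 * t * ν ≤ 3 / 4 * (t * 1) * ‖fderiv ℝ φ (g.1 x)‖ := by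
          rw [mul_one]; gcongr
        linarith
  have : 0 < t * ν := by positivity
  nlinarith

end Deform

section Escape

variable {P : Type*} [NormedAddCommGroup P] [InnerProductSpace ℝ P] [CompleteSpace P]

/-- almost critical points -/
def ACr (φ : P → ℝ) (β ν : ℝ) (u : P) : Prop :=
  (1 + ‖u‖) * ‖fderiv ℝ φ u‖ < ν ∧ -ν ≤ φ u ∧ φ u ≤ β + ν

/-- discreteness of almost critical points -/
def PSc (φ : P → ℝ) (β M m : ℝ) : Prop := ∀ κ : ℝ, 0 < κ → ∃ ν : ℝ, 0 < ν ∧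
  (∀ u, ACr φ β ν u → ‖u‖ ≤ M + 1) ∧
  ∀ u v, ACr φ β ν u → ACr φ β ν v → ‖u - v‖ < m → ‖u - v‖ < κ

/-- near escape function -/
def escN (m ν : ℝ) (y0 p0 y : P) : ℝ :=
  ν * min (min ‖y - y0‖ (max (‖y0 - p0‖ - 2 * (m / 64)) 0 + max (‖y - p0‖ - 2 * (m / 64)) 0)) (m / 8)

/-- far escape function -/
def escF (ν : ℝ) (y0 y : P) : ℝ := ν * min (‖y - y0‖ / (1 + ‖y0‖)) (1 / 2)

theorem escF_lip (ν : ℝ) (hν : 0 ≤ ν) (y0 y y' : P) :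
    escF ν y0 y' - escF ν y0 y ≤ ν / (1 + ‖y0‖) * ‖y' - y‖ := by
  unfold escF
  have hp : 0 < 1 + ‖y0‖ := by positivity
  have h1 : ‖y' - y0‖ ≤ ‖y' - y‖ + ‖y - y0‖ := norm_sub_le_norm_sub_add_norm_sub _ _ _
  have h2 : ‖y' - y0‖ / (1 + ‖y0‖) ≤ ‖y' - y‖ / (1 + ‖y0‖) + ‖y - y0‖ / (1 + ‖y0‖) := by
    rw [← add_div]; gcongr
  have h3 : 0 ≤ ‖y' - y‖ / (1 + ‖y0‖) := by positivity
  have h4 : min (‖y' - y0‖ / (1 + ‖y0‖)) (1 / 2) - min (‖y - y0‖ / (1 + ‖y0‖)) (1 / 2)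
      ≤ ‖y' - y‖ / (1 + ‖y0‖) := by
    rcases min_cases (‖y - y0‖ / (1 + ‖y0‖)) (1 / 2) with ⟨h, h'⟩ | ⟨h, h'⟩ <;> rw [h]
    · linarith [min_le_left (‖y' - y0‖ / (1 + ‖y0‖)) (1 / 2)]
    · linarith [min_le_right (‖y' - y0‖ / (1 + ‖y0‖)) (1 / 2)]
  calc _ = ν * (min (‖y' - y0‖ / (1 + ‖y0‖)) (1 / 2) - min (‖y - y0‖ / (1 + ‖y0‖)) (1 / 2)) := by ring
    _ ≤ ν * (‖y' - y‖ / (1 + ‖y0‖)) := by gcongr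
    _ = _ := by ring

theorem escN_lip (m ν : ℝ) (hν : 0 ≤ ν) (y0 p0 y y' : P) :
    escN m ν y0 p0 y' - escN m ν y0 p0 y ≤ ν * ‖y' - y‖ := by
  unfold escN
  have h1 : ‖y' - y0‖ ≤ ‖y' - y‖ + ‖y - y0‖ := norm_sub_le_norm_sub_add_norm_sub _ _ _
  have h2 : ‖y' - p0‖ ≤ ‖y' - y‖ + ‖y - p0‖ := norm_sub_le_norm_sub_add_norm_sub _ _ _
  have h3 : 0 ≤ ‖y' - y‖ := norm_nonneg _
  have h5 : max (‖y' - p0‖ - 2 * (m / 64)) 0 ≤ ‖y' - y‖ + max (‖y - p0‖ - 2 * (m / 64)) 0 := by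
    apply max_le
    · linarith [le_max_left (‖y - p0‖ - 2 * (m / 64)) 0]
    · linarith [le_max_right (‖y - p0‖ - 2 * (m / 64)) 0]
  rw [← mul_sub]
  apply mul_le_mul_of_nonneg_left _ hν
  generalize max (‖y' - p0‖ - 2 * (m / 64)) 0 = A' at *
  generalize max (‖y - p0‖ - 2 * (m / 64)) 0 = A at *
  generalize max (‖y0 - p0‖ - 2 * (m / 64)) 0 = D at *
  generalize ‖y' - y0‖ = B' at *
  generalize ‖y - y0‖ = B at *
  generalize ‖y' - y‖ = C at *
  have e1 := min_le_left (min B' (D + A')) (m / 8)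
  have e2 := min_le_right (min B' (D + A')) (m / 8)
  have e3 := min_le_left B' (D + A')
  have e4 := min_le_right B' (D + A')
  rcases min_cases (min B (D + A)) (m / 8) with ⟨h, h'⟩ | ⟨h, h'⟩ <;> rw [h]
  · rcases min_cases B (D + A) with ⟨g, g'⟩ | ⟨g, g'⟩ <;> rw [g] <;> linarith
  · linarith

theorem escape_exists {φ : P → ℝ} {β M m c : ℝ} (hm : 0 < m) (hM : 0 < M)
    (hps : PSc φ β M m) (hc0 : 0 < c) (hcβ : c < β) :
    ∃ ε1 > 0, ∀ ε, 0 < ε → ε ≤ ε1 → ∃ e : P → P → ℝ, (∀ y0, Continuous (e y0)) ∧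
      (∀ y0 y, 0 ≤ e y0 y) ∧ (∀ y0, e y0 y0 = 0) ∧
      (∀ y0 y y', c - ε ≤ φ y → φ y ≤ c + ε → ‖y' - y‖ ≤ m / 64 →
        e y0 y' - e y0 y ≤ 1 / 2 * ‖fderiv ℝ φ y‖ * ‖y' - y‖) ∧
      ∃ ν > 0, ∀ y0 y, c - ε ≤ φ y → φ y ≤ c + ε → e y0 y ≤ 2 * ε →
        (‖y - y0‖ < 5 * (m / 64)) ∨ ν / (2 + 2 * ‖y0‖) ≤ ‖fderiv ℝ φ y‖ := by
  obtain ⟨ν, hν, hb, hd⟩ := hps (m / 64) (by positivity)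
  set R1 := 2 * M + 3 with hR1
  set ν1 := ν / (2 * (1 + R1 + m)) with hν1
  set ν2 := ν / 6 with hν2
  have hν1p : 0 < ν1 := by positivity
  have hν2p : 0 < ν2 := by positivity
  refine ⟨min (min c (β - c)) (min (ν1 * (m / 64) / 3) (ν2 / 9)), ?_, ?_⟩
  · have : 0 < β - c := by linarith
    positivity
  intro ε hε hε1
  have hεc : ε ≤ c := hε1.trans ((min_le_left _ _).trans (min_le_left _ _))
  have hεβ : ε ≤ β - c := hε1.trans ((min_le_left _ _).trans (min_le_right _ _))
  have hεν1 : 2 * ε < ν1 * (m / 64) := by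
    have : ε ≤ ν1 * (m / 64) / 3 := hε1.trans ((min_le_right _ _).trans (min_le_left _ _))
    have : 0 < ν1 * (m / 64) := by positivity
    linarith
  have hεν2 : 2 * ε < ν2 / 4 := by
    have : ε ≤ ν2 / 9 := hε1.trans ((min_le_right _ _).trans (min_le_right _ _))
    linarith
  have hAC : ∀ y, c - ε ≤ φ y → φ y ≤ c + ε → (1 + ‖y‖) * ‖fderiv ℝ φ y‖ < ν → ACr φ β ν y := by
    intro y h1 h2 h3
    exact ⟨h3, by linarith, by linarith⟩
  have hp0 : ∀ y0 : P, ∃ p0 : P, ∀ y, c - ε ≤ φ y → φ y ≤ c + ε →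
      (1 + ‖y‖) * ‖fderiv ℝ φ y‖ < ν → ‖y - y0‖ < m / 2 → ‖y - p0‖ < m / 64 := by
    intro y0
    by_cases h : ∃ y, c - ε ≤ φ y ∧ φ y ≤ c + ε ∧
      (1 + ‖y‖) * ‖fderiv ℝ φ y‖ < ν ∧ ‖y - y0‖ < m / 2
    · obtain ⟨p, h1, h2, h3, h4⟩ := h
      refine ⟨p, fun y g1 g2 g3 g4 => hd y p (hAC y g1 g2 g3) (hAC p h1 h2 h3) ?_⟩
      have : ‖y - p‖ ≤ ‖y - y0‖ + ‖y0 - p‖ := norm_sub_le_norm_sub_add_norm_sub _ _ _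
      rw [norm_sub_rev y0 p] at this
      linarith
    · push Not at h
      exact ⟨y0, fun y g1 g2 g3 g4 => absurd g4 (not_lt.2 (h y g1 g2 g3))⟩
  choose p0 hp0 using hp0
  classical
  refine ⟨fun y0 y => if ‖y0‖ ≤ R1 then escN m ν1 y0 (p0 y0) y else escF ν2 y0 y, ?_, ?_, ?_, ?_,
    ν, hν, ?_⟩
  · intro y0
    by_cases h : ‖y0‖ ≤ R1
    · simp only [h, if_true]
      unfold escN; fun_prop
    · simp only [h, if_false]
      unfold escF
      refine continuous_const.mul (Continuous.min ?_ continuous_const)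
      exact (continuous_id.sub continuous_const).norm.div_const _
  · intro y0 y
    dsimp only
    split_ifs
    · unfold escN
      have : 0 ≤ max (‖y0 - p0 y0‖ - 2 * (m / 64)) 0 := le_max_right _ _
      have : 0 ≤ max (‖y - p0 y0‖ - 2 * (m / 64)) 0 := le_max_right _ _
      positivity
    · unfold escF; positivity
  · intro y0
    dsimp only
    split_ifs
    · unfold escN
      have h1 : 0 ≤ max (‖y0 - p0 y0‖ - 2 * (m / 64)) 0 := le_max_right _ _
      rw [sub_self, norm_zero, min_eq_left (a := (0:ℝ)) (by linarith), min_eq_left (by positivity),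
        mul_zero]
    · unfold escF
      rw [sub_self, norm_zero, zero_div, min_eq_left (by norm_num), mul_zero]
  · intro y0 y y' h1 h2 h3
    dsimp only
    have hn0 : 0 ≤ 1 / 2 * ‖fderiv ℝ φ y‖ * ‖y' - y‖ := by positivity
    split_ifs with hR
    · by_cases hg : 2 * ν1 ≤ ‖fderiv ℝ φ y‖
      · refine (escN_lip m ν1 hν1p.le y0 (p0 y0) y y').trans ?_
        gcongr
        linarith
      push Not at hg
      by_cases hy : ‖y - y0‖ < m / 2
      · have hyn : ‖y‖ ≤ R1 + m := by
          have : ‖y‖ ≤ ‖y - y0‖ + ‖y0‖ := by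
            simpa using norm_add_le (y - y0) y0
          linarith
        have hac : (1 + ‖y‖) * ‖fderiv ℝ φ y‖ < ν := by
          calc (1 + ‖y‖) * ‖fderiv ℝ φ y‖ ≤ (1 + R1 + m) * ‖fderiv ℝ φ y‖ :=
                mul_le_mul_of_nonneg_right (by linarith) (norm_nonneg _)
            _ < (1 + R1 + m) * (2 * ν1) := by gcongr
            _ = ν := by
                have hD : 0 < 1 + R1 + m := by positivity
                rw [hν1]
                generalize 1 + R1 + m = D at hD
                field_simp
        have hyp := hp0 y0 y h1 h2 hac hy
        have hy'p : ‖y' - p0 y0‖ ≤ 2 * (m / 64) := by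
          have : ‖y' - p0 y0‖ ≤ ‖y' - y‖ + ‖y - p0 y0‖ := norm_sub_le_norm_sub_add_norm_sub _ _ _
          linarith
        have key : ∀ z, ‖z - p0 y0‖ ≤ 2 * (m / 64) → min ‖z - y0‖
            (max (‖y0 - p0 y0‖ - 2 * (m / 64)) 0 + max (‖z - p0 y0‖ - 2 * (m / 64)) 0) =
            max (‖y0 - p0 y0‖ - 2 * (m / 64)) 0 := by
          intro z hz
          rw [max_eq_right (a := ‖z - p0 y0‖ - 2 * (m / 64)) (by linarith), add_zero]
          apply min_eq_right
          apply max_le _ (norm_nonneg _)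
          have : ‖y0 - p0 y0‖ ≤ ‖y0 - z‖ + ‖z - p0 y0‖ := norm_sub_le_norm_sub_add_norm_sub _ _ _
          rw [norm_sub_rev y0 z] at this
          linarith
        unfold escN
        rw [key y' hy'p, key y (by linarith), sub_self]
        exact hn0
      · push Not at hy
        have hbig : m / 8 ≤ min ‖y - y0‖
            (max (‖y0 - p0 y0‖ - 2 * (m / 64)) 0 + max (‖y - p0 y0‖ - 2 * (m / 64)) 0) := by
          apply le_min
          · linarith
          · have a1 := le_max_left (‖y0 - p0 y0‖ - 2 * (m / 64)) 0
            have a2 := le_max_left (‖y - p0 y0‖ - 2 * (m / 64)) 0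
            have : ‖y - y0‖ ≤ ‖y - p0 y0‖ + ‖p0 y0 - y0‖ := norm_sub_le_norm_sub_add_norm_sub _ _ _
            rw [norm_sub_rev (p0 y0) y0] at this
            linarith
        refine le_trans ?_ hn0
        unfold escN
        rw [min_eq_right hbig, ← mul_sub]
        apply mul_nonpos_of_nonneg_of_nonpos hν1p.le
        linarith [min_le_right (min ‖y' - y0‖ (max (‖y0 - p0 y0‖ - 2 * (m / 64)) 0 +
          max (‖y' - p0 y0‖ - 2 * (m / 64)) 0)) (m / 8)]
    · push Not at hR
      have hp : 0 < 1 + ‖y0‖ := by positivity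
      by_cases hg : 2 * (ν2 / (1 + ‖y0‖)) ≤ ‖fderiv ℝ φ y‖
      · refine (escF_lip ν2 hν2p.le y0 y y').trans ?_
        gcongr
        linarith
      push Not at hg
      by_cases hy : ‖y - y0‖ < (1 + ‖y0‖) / 2
      · exfalso
        have hyn : ‖y‖ ≤ ‖y - y0‖ + ‖y0‖ := by
          simpa using norm_add_le (y - y0) y0
        have hyn2 : ‖y0‖ ≤ ‖y - y0‖ + ‖y‖ := by
          have := norm_sub_le_norm_sub_add_norm_sub y0 y 0
          rw [norm_sub_rev y0 y] at this
          simpa using this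
        have hac : (1 + ‖y‖) * ‖fderiv ℝ φ y‖ < ν := by
          calc (1 + ‖y‖) * ‖fderiv ℝ φ y‖ ≤ (3 / 2 * (1 + ‖y0‖)) * ‖fderiv ℝ φ y‖ := by
                gcongr; linarith
            _ < (3 / 2 * (1 + ‖y0‖)) * (2 * (ν2 / (1 + ‖y0‖))) := by gcongr
            _ = ν / 2 := by rw [hν2]; field_simp; norm_num
            _ < ν := by linarith
        have := hb y (hAC y h1 h2 hac)
        linarith
      · push Not at hy
        refine le_trans ?_ hn0
        have hbig : 1 / 2 ≤ ‖y - y0‖ / (1 + ‖y0‖) := by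
          rw [le_div_iff₀ hp]; linarith
        unfold escF
        rw [min_eq_right hbig, ← mul_sub]
        apply mul_nonpos_of_nonneg_of_nonpos hν2p.le
        linarith [min_le_right (‖y' - y0‖ / (1 + ‖y0‖)) (1 / 2)]
  · intro y0 y h1 h2 h3
    dsimp only at h3
    split_ifs at h3 with hR
    · left
      unfold escN at h3
      have h4 := lt_of_le_of_lt h3 hεν1
      have h5 := lt_of_mul_lt_mul_left h4 hν1p.le
      have h6 : min ‖y - y0‖
            (max (‖y0 - p0 y0‖ - 2 * (m / 64)) 0 + max (‖y - p0 y0‖ - 2 * (m / 64)) 0) < m / 64 := by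
        rcases min_lt_iff.1 h5 with h | h
        · exact h
        · linarith
      have a1 := le_max_left (‖y0 - p0 y0‖ - 2 * (m / 64)) 0
      have a2 := le_max_left (‖y - p0 y0‖ - 2 * (m / 64)) 0
      have : ‖y - y0‖ ≤ ‖y - p0 y0‖ + ‖p0 y0 - y0‖ := norm_sub_le_norm_sub_add_norm_sub _ _ _
      rw [norm_sub_rev (p0 y0) y0] at this
      rcases min_lt_iff.1 h6 with h | h <;> linarith
    · right
      push Not at hR
      have hp : 0 < 1 + ‖y0‖ := by positivity
      unfold escF at h3
      have h4 : ν2 * min (‖y - y0‖ / (1 + ‖y0‖)) (1 / 2) < ν2 * (1 / 4) := by linarith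
      have h5 := lt_of_mul_lt_mul_left h4 hν2p.le
      have h6 : ‖y - y0‖ / (1 + ‖y0‖) < 1 / 4 := by
        rcases min_lt_iff.1 h5 with h | h
        · exact h
        · norm_num at h
      rw [div_lt_iff₀ hp] at h6
      have hyn : ‖y‖ ≤ ‖y - y0‖ + ‖y0‖ := by
        simpa using norm_add_le (y - y0) y0
      have hyn2 : ‖y0‖ ≤ ‖y - y0‖ + ‖y‖ := by
        have := norm_sub_le_norm_sub_add_norm_sub y0 y 0
        rw [norm_sub_rev y0 y] at this
        simpa using this
      have h7 : ν ≤ (1 + ‖y‖) * ‖fderiv ℝ φ y‖ := by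
        by_contra h
        push Not at h
        have := hb y (hAC y h1 h2 h)
        linarith
      rw [div_le_iff₀ (by positivity)]
      have h8 : 0 ≤ ‖fderiv ℝ φ y‖ := norm_nonneg _
      nlinarith

end Escape

section Gap

variable {P : Type*} [NormedAddCommGroup P] [InnerProductSpace ℝ P] [CompleteSpace P]

theorem gap_near {φ : P → ℝ} {β M m c ε : ℝ} (hφ : ContDiff ℝ 1 φ) (hm : 0 < m)
    (hps : PSc φ β M m) (h0 : 0 ≤ c - ε) (hβ : c + ε ≤ β)
    (hiso : ∀ p, fderiv ℝ φ p = 0 → c - ε ≤ φ p → φ p ≤ c + ε → φ p = c)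
    (A : Set P) (hA : IsCompact A) :
    ∃ ν0 > 0, ∀ y0 ∈ A, ∀ y, c - ε ≤ φ y → φ y ≤ c + ε → ‖y - y0‖ < 5 * (m / 64) →
      (∀ p, fderiv ℝ φ p = 0 → φ p = c → m / 4 ≤ ‖y0 - p‖) → ν0 ≤ ‖fderiv ℝ φ y‖ := by
  by_contra hcon
  push Not at hcon
  have hk : ∀ k : ℕ, ∃ y0 ∈ A, ∃ y, c - ε ≤ φ y ∧ φ y ≤ c + ε ∧ ‖y - y0‖ < 5 * (m / 64) ∧
      (∀ p, fderiv ℝ φ p = 0 → φ p = c → m / 4 ≤ ‖y0 - p‖) ∧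
      ‖fderiv ℝ φ y‖ < 1 / ((k : ℝ) + 1) := fun k => hcon _ Nat.one_div_pos_of_nat
  choose y0 hy0 y h1 h2 h3 h4 h5 using hk
  obtain ⟨a0, ha0, ψ, hψ, hlim⟩ := hA.tendsto_subseq hy0
  obtain ⟨R, hR⟩ := hA.isBounded.exists_norm_le
  have hf0 : Tendsto (fun k => ‖fderiv ℝ φ (y (ψ k))‖) atTop (𝓝 0) := by
    have := (squeeze_zero (fun k => norm_nonneg _) (fun k => (h5 k).le)
      tendsto_one_div_add_atTop_nhds_zero_nat)
    exact this.comp hψ.tendsto_atTop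
  have hbd : ∀ k, ‖y k‖ ≤ R + m := by
    intro k
    have : ‖y k‖ ≤ ‖y k - y0 k‖ + ‖y0 k‖ := by simpa using norm_add_le (y k - y0 k) (y0 k)
    linarith [hR _ (hy0 k), h3 k]
  have hg0 : Tendsto (fun k => (1 + ‖y (ψ k)‖) * ‖fderiv ℝ φ (y (ψ k))‖) atTop (𝓝 0) := by
    have : Tendsto (fun k => (1 + (R + m)) * ‖fderiv ℝ φ (y (ψ k))‖) atTop (𝓝 0) := by
      simpa using hf0.const_mul (1 + (R + m))
    refine squeeze_zero (fun k => by positivity) (fun k => ?_) this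
    exact mul_le_mul_of_nonneg_right (by linarith [hbd (ψ k)]) (norm_nonneg _)
  have hAC : ∀ ν : ℝ, 0 < ν → ∀ᶠ k in atTop, ACr φ β ν (y (ψ k)) := by
    intro ν hν
    filter_upwards [hg0.eventually (gt_mem_nhds hν)] with k hk
    exact ⟨hk, by linarith [h1 (ψ k)], by linarith [h2 (ψ k)]⟩
  have hcl : ∀ᶠ k in atTop, ‖y0 (ψ k) - a0‖ < m / 64 := by
    have := (Metric.tendsto_nhds.1 hlim) (m / 64) (by positivity)
    filter_upwards [this] with k hk
    rw [← dist_eq_norm]; exact hk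
  have hcau : CauchySeq (fun k => y (ψ k)) := by
    rw [Metric.cauchySeq_iff]
    intro κ hκ
    obtain ⟨ν, hν, -, hd⟩ := hps κ hκ
    obtain ⟨N, hN⟩ := eventually_atTop.1 ((hAC ν hν).and hcl)
    refine ⟨N, fun i hi j hj => ?_⟩
    rw [dist_eq_norm]
    apply hd _ _ (hN i hi).1 (hN j hj).1
    have e1 := (hN i hi).2
    have e2 := (hN j hj).2
    have e3 := h3 (ψ i)
    have e4 := h3 (ψ j)
    have : y (ψ i) - y (ψ j) = (y (ψ i) - y0 (ψ i)) + (y0 (ψ i) - a0) - (y0 (ψ j) - a0)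
      - (y (ψ j) - y0 (ψ j)) := by abel
    rw [this]
    refine lt_of_le_of_lt (norm_sub_le _ _) ?_
    refine lt_of_le_of_lt (add_le_add_left (norm_sub_le _ _) _) ?_
    refine lt_of_le_of_lt (add_le_add_left (add_le_add_left (norm_add_le _ _) _) _) ?_
    linarith
  obtain ⟨z, hz⟩ := cauchySeq_tendsto_of_complete hcau
  have hφc : Tendsto (fun k => φ (y (ψ k))) atTop (𝓝 (φ z)) :=
    (hφ.continuous.tendsto z).comp hz
  have hz0 : fderiv ℝ φ z = 0 := by
    have : Tendsto (fun k => ‖fderiv ℝ φ (y (ψ k))‖) atTop (𝓝 ‖fderiv ℝ φ z‖) :=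
      (((hφ.continuous_fderiv one_ne_zero).norm).tendsto z).comp hz
    exact norm_eq_zero.1 (tendsto_nhds_unique this hf0)
  have hzc : φ z = c := hiso z hz0 (ge_of_tendsto' hφc fun k => h1 _)
    (le_of_tendsto' hφc fun k => h2 _)
  have l1 : Tendsto (fun k => ‖y0 (ψ k) - z‖) atTop (𝓝 ‖a0 - z‖) := (hlim.sub_const z).norm
  have l2 : m / 4 ≤ ‖a0 - z‖ := ge_of_tendsto' l1 fun k => h4 _ z hz0 hzc
  have l3 : Tendsto (fun k => ‖y (ψ k) - y0 (ψ k)‖) atTop (𝓝 ‖z - a0‖) := (hz.sub hlim).norm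
  have l4 : ‖z - a0‖ ≤ 5 * (m / 64) := le_of_tendsto' l3 fun k => (h3 _).le
  rw [norm_sub_rev] at l4
  linarith

theorem sep_crit {φ : P → ℝ} {β M m : ℝ} (hps : PSc φ β M m) {p q : P}
    (hp : fderiv ℝ φ p = 0) (hq : fderiv ℝ φ q = 0) (hp0 : 0 ≤ φ p) (hpβ : φ p ≤ β)
    (hq0 : 0 ≤ φ q) (hqβ : φ q ≤ β) (h : ‖p - q‖ < m) : p = q := by
  by_contra hne
  obtain ⟨ν, hν, -, hd⟩ := hps ‖p - q‖ (norm_pos_iff.2 (sub_ne_zero.2 hne))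
  refine lt_irrefl _ (hd p q ⟨?_, by linarith, by linarith⟩ ⟨?_, by linarith, by linarith⟩ h)
  · simpa [hp]
  · simpa [hq]

/-- One deformation stage: combination of `deform`, `escape_exists`, `gap_near`. -/
theorem stage {φ : P → ℝ} {β M m c : ℝ} (hφ : ContDiff ℝ 1 φ) (he : ∀ p, φ (-p) = φ p)
    (hm : 0 < m) (hM : 0 < M) (hps : PSc φ β M m) (hc0 : 0 < c) (hcβ : c < β)
    (ε0 : ℝ) (hε0 : 0 < ε0)
    (hiso : ∀ p, fderiv ℝ φ p = 0 → c - ε0 ≤ φ p → φ p ≤ c + ε0 → φ p = c) :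
    ∃ ε, 0 < ε ∧ ε ≤ ε0 ∧ ε ≤ c / 2 ∧ ∀ {X : Type} [TopologicalSpace X] [CompactSpace X] (σ : X → X)
      (h0 : C(X, P)) (_ : ∀ x, h0 (σ x) = -h0 x) (_ : ∀ x, φ (h0 x) ≤ c + ε)
      (_ : ∀ x, φ (h0 x) ≤ c - ε ∨ ∀ p, fderiv ℝ φ p = 0 → φ p = c → m / 4 ≤ ‖h0 x - p‖),
      ∃ g : C(X, P), (∀ x, g (σ x) = -g x) ∧ (∀ x, φ (h0 x) ≤ c - ε → g x = h0 x) ∧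
        ∀ x, φ (g x) ≤ c - ε / 4 := by
  obtain ⟨ε1, hε1, hesc⟩ := escape_exists hm hM hps hc0 hcβ
  set ε := min (min ε1 ε0) (min (c / 2) (β - c)) with hεd
  have hε : 0 < ε := by
    have : 0 < β - c := by linarith
    positivity
  have i1 : ε ≤ ε1 := (min_le_left _ _).trans (min_le_left _ _)
  have i2 : ε ≤ ε0 := (min_le_left _ _).trans (min_le_right _ _)
  have i3 : ε ≤ c / 2 := (min_le_right _ _).trans (min_le_left _ _)
  have i4 : ε ≤ β - c := (min_le_right _ _).trans (min_le_right _ _)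
  refine ⟨ε, hε, i2, i3, ?_⟩
  intro X _ _ σ h0 hodd hle hX
  obtain ⟨e, hec, he0, hes, heL, ν, hν, hfar⟩ := hesc ε hε i1
  have hA : IsCompact (Set.range h0) := isCompact_range h0.continuous
  obtain ⟨RA, hRA⟩ := hA.isBounded.exists_norm_le
  obtain ⟨ν0, hν0, hnear⟩ := gap_near hφ hm hps (by linarith) (by linarith)
    (fun p hp h1 h2 => hiso p hp (by linarith) (by linarith)) (Set.range h0) hA (ε := ε)
  have hRp : 0 < 2 + 2 * |RA| := by positivity
  refine deform hφ he σ h0 hodd c ε (m / 64) (min ν0 (ν / (2 + 2 * |RA|))) hε (by positivity)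
    (by positivity) hle (fun x => e (h0 x)) (fun x => hec _) (fun x => he0 _) (fun x => hes _)
    (fun x => heL _) ?_
  intro x y hx hy1 hy2 hy3
  rcases hfar (h0 x) y hy1 hy2 hy3 with h | h
  · refine (min_le_left _ _).trans (hnear _ ⟨x, rfl⟩ y hy1 hy2 h ?_)
    rcases hX x with h' | h'
    · linarith
    · exact h'
  · refine (min_le_right _ _).trans (le_trans ?_ h)
    have : ‖h0 x‖ ≤ |RA| := (hRA _ ⟨x, rfl⟩).trans (le_abs_self _)
    gcongr

end Gap

section Basics
variable {P Q : Type*}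
  [NormedAddCommGroup P] [InnerProductSpace ℝ P]
  [NormedAddCommGroup Q] [NormedSpace ℝ Q]
  {I : P × Q → ℝ} {r a : ℝ} {m : P → P × Q}

theorem m_eq (hm : IsMMap I m) (p : P) : m p = (p, (m p).2) :=
  Prod.ext (hm.mem p).2 rfl

theorem I_m_lt (hI : HypI I r a) (hm : IsMMap I m) (p : P) (q : Q) (hq : q ≠ (m p).2) :
    I (m p) < I (p, q) := by
  have h := hI.i5 (m p) (hm.mem p).1 (q - (m p).2) (sub_ne_zero.mpr hq)
  have e : m p + (0, q - (m p).2) = (p, q) := by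
    refine Prod.ext ?_ ?_
    · simp [(hm.mem p).2]
    · simp
  rwa [e] at h

theorem I_m_le (hI : HypI I r a) (hm : IsMMap I m) (p : P) (q : Q) :
    I (m p) ≤ I (p, q) := by
  by_cases hq : q = (m p).2
  · rw [hq, ← m_eq hm p]
  · exact (I_m_lt hI hm p q hq).le

theorem J_le_phi (hI : HypI I r a) (hm : IsMMap I m) (p : P) (q : Q) :
    Jfun I (p, q) ≤ Jfun I (m p) := by
  unfold Jfun
  rw [(hm.mem p).2]
  have := I_m_le hI hm p q
  simp only
  linarith

theorem m_continuous (hI : HypI I r a) (hm : IsMMap I m) : Continuous m := by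
  have hIc : Continuous I := hI.i1.1.continuous
  rw [continuous_iff_seqContinuous]
  intro p p0 hp
  refine tendsto_of_subseq_tendsto fun ns hns => ?_
  -- upper bounds
  have hp' : Tendsto (fun n => p (ns n)) atTop (𝓝 p0) := hp.comp hns
  have hup : Tendsto (fun n => I (p (ns n), (m p0).2)) atTop (𝓝 (I (m p0))) := by
    have h1 : Tendsto (fun n => (p (ns n), (m p0).2)) atTop (𝓝 (p0, (m p0).2)) :=
      hp'.prodMk_nhds tendsto_const_nhds
    rw [← m_eq hm p0] at h1
    exact (hIc.tendsto _).comp h1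
  obtain ⟨B1, hB1⟩ := hup.bddAbove_range
  obtain ⟨B2, hB2⟩ := hp'.norm.bddAbove_range
  obtain ⟨R, hR⟩ := hI.i4 (B1 + B2 + 1)
  have hbd : ∀ n, ‖(m (p (ns n))).2‖ ≤ R := by
    intro n
    by_contra hcon
    push Not at hcon
    have h1 : R ≤ XNorm (m (p (ns n))) := by
      unfold XNorm
      apply Real.le_sqrt_of_sq_le
      have h0 : 0 ≤ R ∨ R < 0 := le_or_gt 0 R
      rcases h0 with h0 | h0
      · nlinarith [sq_nonneg ‖(m (p (ns n))).1‖]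
      · exfalso
        have := hR 0 (h0.le.trans (Real.sqrt_nonneg _))
        have h3 := hB1 ⟨0, rfl⟩
        have h4 := hB2 ⟨0, rfl⟩
        have h5 := hI.i1.2.2 (p (ns 0), (m p0).2)
        have h6 := norm_nonneg (p (ns 0))
        rw [hI.i1.2.1] at this
        simp only [Prod.fst_zero, norm_zero] at this h3 h4
        linarith
    have h2 := hR _ h1
    rw [(hm.mem _).2] at h2
    have h3 := hB1 ⟨n, rfl⟩
    have h4 := hB2 ⟨n, rfl⟩
    have h5 := I_m_le hI hm (p (ns n)) (m p0).2
    simp only at h3 h4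
    linarith
  obtain ⟨z, ψ, hψ, hz⟩ := weak_seq_compact hI.refl (fun n => (m (p (ns n))).2) R hbd
  refine ⟨ψ, ?_⟩
  have hT : TConv (fun n => m (p (ns (ψ n)))) (p0, z) := by
    refine ⟨?_, hz⟩
    have : (fun n => (m (p (ns (ψ n)))).1) = fun n => p (ns (ψ n)) :=
      funext fun n => (hm.mem _).2
    rw [this]
    exact hp'.comp hψ.tendsto_atTop
  have hup' := hup.comp hψ.tendsto_atTop
  have hle : I (p0, z) ≤ I (m p0) := by
    by_contra hcon
    push Not at hcon
    obtain ⟨c, hc1, hc2⟩ := exists_between hcon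
    have h1 := hI.i2 _ _ hT c hc2
    have h2 := hup'.eventually (gt_mem_nhds hc1)
    obtain ⟨n, hn1, hn2⟩ := (h1.and h2).exists
    have := I_m_le hI hm (p (ns (ψ n))) (m p0).2
    simp only [Function.comp] at hn2
    linarith
  have hz0 : z = (m p0).2 := by
    by_contra hne
    have := I_m_lt hI hm p0 z hne
    linarith
  subst hz0
  rw [← m_eq hm p0] at hT
  refine hI.i3 _ _ hT ?_
  rw [tendsto_order]
  refine ⟨fun c hc => hI.i2 _ _ hT c hc, fun c hc => ?_⟩
  filter_upwards [hup'.eventually (gt_mem_nhds hc)] with n hn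
  exact (I_m_le hI hm _ (m p0).2).trans_lt hn

theorem J_contDiff (hI : HypI I r a) : ContDiff ℝ 1 (Jfun I) := by
  unfold Jfun
  have h1 : ContDiff ℝ 1 (fun u : P × Q => ‖u.1‖ ^ 2 / 2) :=
    (contDiff_fst.norm_sq ℝ).div_const 2
  exact h1.sub hI.i1.1

theorem phi_hasFDerivAt (hI : HypI I r a) (hm : IsMMap I m) (p : P) :
    HasFDerivAt (fun p => Jfun I (m p))
      ((fderiv ℝ (Jfun I) (m p)).comp (ContinuousLinearMap.inl ℝ P Q)) p := by
  have hs : HasStrictFDerivAt (Jfun I) (fderiv ℝ (Jfun I) (m p)) (m p) :=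
    (J_contDiff hI).contDiffAt.hasStrictFDerivAt (by norm_num)
  have hmc := m_continuous hI hm
  rw [hasFDerivAt_iff_isLittleO_nhds_zero, Asymptotics.isLittleO_iff]
  intro c hc
  have hs' := hs.isLittleO
  rw [Asymptotics.isLittleO_iff] at hs'
  have hev := hs' hc
  have hq : Tendsto (fun h : P => (m (p + h)).2) (𝓝 0) (𝓝 (m p).2) := by
    have : Continuous fun h : P => (m (p + h)).2 := by fun_prop
    simpa using this.tendsto 0
  have ha : Tendsto (fun h : P => p + h) (𝓝 0) (𝓝 p) := by
    have : Continuous fun h : P => p + h := by fun_prop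
    simpa using this.tendsto 0
  have hme := m_eq hm p
  -- upper
  have t1 : Tendsto (fun h : P => ((p + h, (m (p + h)).2), (p, (m (p + h)).2))) (𝓝 0)
      (𝓝 (m p, m p)) := by
    have h1 := (ha.prodMk_nhds hq).prodMk_nhds
      ((tendsto_const_nhds (x := p) (f := 𝓝 (0:P))).prodMk_nhds hq)
    rwa [← hme] at h1
  have t2 : Tendsto (fun h : P => ((p + h, (m p).2), (p, (m p).2))) (𝓝 0)
      (𝓝 (m p, m p)) := by
    have h1 := (ha.prodMk_nhds (tendsto_const_nhds (x := (m p).2) (f := 𝓝 (0:P)))).prodMk_nhds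
      ((tendsto_const_nhds (x := p) (f := 𝓝 (0:P))).prodMk_nhds
        (tendsto_const_nhds (x := (m p).2) (f := 𝓝 (0:P))))
    rw [← hme] at h1 ⊢
    exact h1
  filter_upwards [t1.eventually hev, t2.eventually hev] with h h1 h2
  simp only [Prod.mk_sub_mk, add_sub_cancel_left, sub_self] at h1 h2
  have e : ‖((h, 0) : P × Q)‖ = ‖h‖ := by simp [Prod.norm_def]
  rw [e, Real.norm_eq_abs, abs_le] at h1 h2
  simp only [ContinuousLinearMap.coe_comp, Function.comp, ContinuousLinearMap.inl_apply]
  rw [Real.norm_eq_abs, abs_le]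
  have b1 := J_le_phi hI hm p (m (p + h)).2
  have b2 := J_le_phi hI hm (p + h) (m p).2
  have b3 : Jfun I (p + h, (m (p + h)).2) = Jfun I (m (p + h)) := by rw [← m_eq hm (p + h)]
  have b4 : Jfun I (p, (m p).2) = Jfun I (m p) := by rw [← hme]
  constructor <;> linarith [h1.1, h1.2, h2.1, h2.2]

theorem phi_contDiff (hI : HypI I r a) (hm : IsMMap I m) :
    ContDiff ℝ 1 (fun p => Jfun I (m p)) := by
  rw [contDiff_one_iff_fderiv]
  refine ⟨fun p => (phi_hasFDerivAt hI hm p).differentiableAt, ?_⟩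
  have : fderiv ℝ (fun p => Jfun I (m p)) = fun p =>
      (fderiv ℝ (Jfun I) (m p)).comp (ContinuousLinearMap.inl ℝ P Q) :=
    funext fun p => (phi_hasFDerivAt hI hm p).fderiv
  rw [this]
  have h1 : Continuous (fderiv ℝ (Jfun I)) := (J_contDiff hI).continuous_fderiv (by norm_num)
  have := m_continuous hI hm
  fun_prop

theorem phi_even (hI : HypI I r a) (hm : IsMMap I m) (heven : ∀ u : P × Q, I (-u) = I u) (p : P) :
    Jfun I (m (-p)) = Jfun I (m p) := by
  have hJ : ∀ u : P × Q, Jfun I (-u) = Jfun I u := by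
    intro u; unfold Jfun; rw [heven]; simp
  have key : ∀ p, Jfun I (m p) ≤ Jfun I (m (-p)) := by
    intro p
    have := J_le_phi hI hm (-p) (-(m p).2)
    rw [← Prod.neg_mk, ← m_eq hm p, hJ] at this
    exact this
  apply le_antisymm _ (key p)
  simpa using key (-p)

theorem phi_zero (hI : HypI I r a) (hm : IsMMap I m) : Jfun I (m 0) = 0 := by
  have h1 := J_le_phi hI hm 0 0
  have h2 := hI.i1.2.2 (m 0)
  have h3 : Jfun I ((0:P), (0:Q)) = 0 := by
    unfold Jfun; rw [Prod.mk_zero_zero, hI.i1.2.1]; simp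
  have h4 : Jfun I (m 0) ≤ 0 := by unfold Jfun; rw [(hm.mem 0).2]; simp [h2]
  linarith

theorem phi_sphere (hI : HypI I r a) (hm : IsMMap I m) (p : P) (hp : ‖p‖ = r) :
    a ≤ Jfun I (m p) := by
  refine le_trans ?_ (J_le_phi hI hm p 0)
  obtain ⟨_, h2, h3⟩ := hI.i6
  have hb : BddBelow {y : ℝ | ∃ p : P, ‖p‖ = r ∧ y = Jfun I (p, 0)} := by
    by_contra hcon
    rw [Real.sInf_of_not_bddBelow hcon] at h2
    linarith
  rw [h2]
  exact csInf_le hb ⟨p, hp, rfl⟩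

theorem phi_neg_large (hI : HypI I r a) (hm : IsMMap I m) {n : ℕ}
    (L : (Fin n → ℝ) →ₗ[ℝ] P) (hL : Function.Injective L) :
    ∃ R : ℝ, ∀ x, R ≤ ‖x‖ → Jfun I (m (L x)) < 0 := by
  by_contra hcon
  push Not at hcon
  choose x hx1 hx2 using fun k : ℕ => hcon (k + 1)
  have hLc : Continuous L := L.continuous_of_finiteDimensional
  have hpos : ∀ k, 0 < ‖x k‖ := fun k => lt_of_lt_of_le (by positivity) (hx1 k)
  have htop : Tendsto (fun k => ‖x k‖) atTop atTop := by
    refine tendsto_atTop_mono hx1 ?_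
    exact tendsto_atTop_add_const_right _ _ tendsto_natCast_atTop_atTop
  have hsph : ∀ k, (‖x k‖⁻¹ • x k) ∈ Metric.sphere (0 : Fin n → ℝ) 1 := by
    intro k
    simp [norm_smul, (hpos k).ne']
  obtain ⟨z, hz, ψ, hψ, hlim⟩ := (isCompact_sphere (0 : Fin n → ℝ) 1).tendsto_subseq hsph
  have hz0 : L z ≠ 0 := by
    intro h
    rw [← map_zero L] at h
    rw [hL h] at hz
    simp at hz
  have hlim' : Tendsto (fun k => L (‖x (ψ k)‖⁻¹ • x (ψ k))) atTop (𝓝 (L z)) :=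
    (hLc.tendsto z).comp hlim
  have h7 := hI.i7 (fun k => ‖x (ψ k)‖) (fun k => ‖x (ψ k)‖⁻¹ • m (L (x (ψ k)))) (L z)
    (htop.comp hψ.tendsto_atTop) (by
      refine hlim'.congr fun k => ?_
      simp [(hm.mem _).2]) hz0
  have hb := (hlim'.norm.pow 2).div_const 2
  obtain ⟨B, hB⟩ := hb.bddAbove_range
  obtain ⟨k, hk⟩ := (h7.eventually (eventually_gt_atTop B)).exists
  have h1 := hB ⟨k, rfl⟩
  have hp := hpos (ψ k)
  simp only [smul_smul, mul_inv_cancel₀ hp.ne', one_smul] at hk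
  have h2 := hx2 (ψ k)
  unfold Jfun at h2
  rw [(hm.mem _).2] at h2
  have h3 : ‖L (‖x (ψ k)‖⁻¹ • x (ψ k))‖ ^ 2 / 2 = (‖L (x (ψ k))‖ ^ 2 / 2) / ‖x (ψ k)‖ ^ 2 := by
    rw [map_smul, norm_smul, norm_inv, norm_norm]
    field_simp
  simp only [h3] at h1
  have h4 : I (m (L (x (ψ k)))) / ‖x (ψ k)‖ ^ 2 ≤ (‖L (x (ψ k))‖ ^ 2 / 2) / ‖x (ψ k)‖ ^ 2 := by
    gcongr
    linarith
  linarith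

end Basics

section GInv
variable {P Q : Type*}
  [NormedAddCommGroup P] [InnerProductSpace ℝ P]
  [NormedAddCommGroup Q] [NormedSpace ℝ Q]
  {I : P × Q → ℝ} {r a : ℝ} {m : P → P × Q}
  {G : Type*} [Group G] {act : G → P × Q → P × Q}

theorem actP_mk (hPinv : ∀ (g : G) (p : P), (act g ((p, 0) : P × Q)).2 = 0) (g : G) (p : P) :
    act g (p, 0) = (actP act g p, 0) :=
  Prod.ext rfl (hPinv g p)

theorem actP_mul (hact_mul : ∀ g h : G, act (g * h) = act g ∘ act h)
    (hPinv : ∀ (g : G) (p : P), (act g ((p, 0) : P × Q)).2 = 0) (g h : G) (p : P) :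
    actP act (g * h) p = actP act g (actP act h p) := by
  unfold actP
  rw [hact_mul, Function.comp, actP_mk hPinv h p]

theorem actP_inv_mul (hact_one : act 1 = id)
    (hact_mul : ∀ g h : G, act (g * h) = act g ∘ act h)
    (hPinv : ∀ (g : G) (p : P), (act g ((p, 0) : P × Q)).2 = 0) (g : G) (p : P) :
    actP act g⁻¹ (actP act g p) = p := by
  rw [← actP_mul hact_mul hPinv, inv_mul_cancel]
  unfold actP
  rw [hact_one]; rfl

theorem act_fst (hact_one : act 1 = id)
    (hact_mul : ∀ g h : G, act (g * h) = act g ∘ act h)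
    (hact_isom : ∀ (g : G) (u v : P × Q), XNorm (act g u - act g v) = XNorm (u - v))
    (hPinv : ∀ (g : G) (p : P), (act g ((p, 0) : P × Q)).2 = 0)
    (g : G) (p : P) (q : Q) : (act g (p, q)).1 = actP act g p := by
  -- squared distances
  have hsq : ∀ (w : P) , ‖(act g (p, q)).1 - actP act g w‖ ^ 2 + ‖(act g (p, q)).2‖ ^ 2
      = ‖p - w‖ ^ 2 + ‖q‖ ^ 2 := by
    intro w
    have h := hact_isom g (p, q) (w, 0)
    rw [actP_mk hPinv] at h
    unfold XNorm at h
    rw [Real.sqrt_inj (by positivity) (by positivity)] at h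
    simpa using h
  have h1 := hsq p
  have h2 := hsq (actP act g⁻¹ (act g (p, q)).1)
  have h3 : actP act g (actP act g⁻¹ (act g (p, q)).1) = (act g (p, q)).1 := by
    have := actP_inv_mul hact_one hact_mul hPinv g⁻¹ (act g (p, q)).1
    rwa [inv_inv] at this
  rw [h3] at h2
  simp only [sub_self, norm_zero] at h1 h2
  have h4 : ‖(act g (p, q)).1 - actP act g p‖ ^ 2 ≤ 0 := by
    nlinarith [sq_nonneg ‖p - actP act g⁻¹ (act g (p, q)).1‖]
  have h5 : ‖(act g (p, q)).1 - actP act g p‖ = 0 := by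
    nlinarith [norm_nonneg ((act g (p, q)).1 - actP act g p)]
  exact sub_eq_zero.mp (norm_eq_zero.mp h5)

theorem phi_inv (hI : HypI I r a) (hm : IsMMap I m) (hact_one : act 1 = id)
    (hact_mul : ∀ g h : G, act (g * h) = act g ∘ act h)
    (hact_isom : ∀ (g : G) (u v : P × Q), XNorm (act g u - act g v) = XNorm (u - v))
    (hJinv : ∀ (g : G) (u : P × Q), Jfun I (act g u) = Jfun I u)
    (hPinv : ∀ (g : G) (p : P), (act g ((p, 0) : P × Q)).2 = 0)
    (g : G) (p : P) : Jfun I (m (actP act g p)) = Jfun I (m p) := by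
  have key : ∀ (g : G) (p : P), Jfun I (m p) ≤ Jfun I (m (actP act g p)) := by
    intro g p
    have h1 := J_le_phi hI hm (actP act g p) (act g (m p)).2
    have h2 : (actP act g p, (act g (m p)).2) = act g (m p) := by
      refine Prod.ext ?_ rfl
      have := act_fst hact_one hact_mul hact_isom hPinv g p (m p).2
      rw [← m_eq hm p] at this
      exact this.symm
    rwa [h2, hJinv] at h1
  apply le_antisymm _ (key g p)
  have := key g⁻¹ (actP act g p)
  rwa [actP_inv_mul hact_one hact_mul hPinv] at this

/-- If there is no infinite family of critical orbits, there is a finite covering one. -/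
theorem finite_of_not (hact_one : act 1 = id)
    (hact_mul : ∀ g h : G, act (g * h) = act g ∘ act h)
    (hPinv : ∀ (g : G) (p : P), (act g ((p, 0) : P × Q)).2 = 0) (C : P → Prop)
    (hno : ¬ ∃ u : ℕ → P, (∀ n, C (u n)) ∧
      ∀ i j : ℕ, i ≠ j → ∀ g : G, actP act g (u i) ≠ u j) :
    ∃ S : Finset P, (∀ q ∈ S, C q) ∧ ∀ p, C p → ∃ q ∈ S, ∃ g : G, actP act g q = p := by
  by_contra hcon
  apply hno
  have hsymm : ∀ p q : P, (∀ g : G, actP act g p ≠ q) → ∀ g : G, actP act g q ≠ p := by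
    intro p q h g hg
    apply h g⁻¹
    rw [← hg, actP_inv_mul hact_one hact_mul hPinv]
  obtain ⟨u, hu1, hu2⟩ := exists_seq_of_forall_finset_exists C
    (fun p q => ∀ g : G, actP act g p ≠ q) (by
      intro S hS
      by_contra h
      push Not at h
      exact hcon ⟨S, hS, fun p hp => by
        obtain ⟨q, hq, g, hg⟩ := h p hp
        exact ⟨q, hq, g, hg⟩⟩)
  refine ⟨u, hu1, fun i j hij => ?_⟩
  rcases lt_or_gt_of_ne hij with h | h
  · exact hu2 i j h
  · exact hsymm _ _ (hu2 j i h)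

end GInv

section PScPart

variable {P Q : Type*}
  [NormedAddCommGroup P] [InnerProductSpace ℝ P] [CompleteSpace P]
  [NormedAddCommGroup Q] [NormedSpace ℝ Q] [CompleteSpace Q] {G : Type*} [Group G]

theorem cerami_of_ACr (I : P × Q → ℝ) (m : P → P × Q) (β : ℝ) (u : ℕ → P)
    (h : ∀ k : ℕ, ACr (fun p => Jfun I (m p)) β (1 / ((k : ℝ) + 1)) (u k)) :
    CeramiBdd I m β u := by
  refine ⟨squeeze_zero (fun k => by positivity) (fun k => (h k).1.le)
    tendsto_one_div_add_atTop_nhds_zero_nat, ?_⟩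
  intro ε hε
  filter_upwards [tendsto_one_div_add_atTop_nhds_zero_nat.eventually (gt_mem_nhds hε)] with k hk
  have h1 := (h k).2.1
  have h2 := (h k).2.2
  exact ⟨by linarith, by dsimp only at h2; linarith⟩

theorem ACr_mono {φ : P → ℝ} {β ν ν' : ℝ} (h : ν ≤ ν') {u : P} (hu : ACr φ β ν u) :
    ACr φ β ν' u := ⟨hu.1.trans_le h, by linarith [hu.2.1], by linarith [hu.2.2]⟩

theorem PSc_of_Mcond (I : P × Q → ℝ) (m : P → P × Q) (act : G → P × Q → P × Q) (β : ℝ)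
    (hM : McondZero I m act β) (hf : FinOrbits I m act β) :
    ∃ M mβ : ℝ, 0 < M ∧ 0 < mβ ∧ PSc (fun p => Jfun I (m p)) β M mβ := by
  obtain ⟨⟨M, hM0, hMb⟩, hb⟩ := hM
  obtain ⟨mβ, hm0, hmb⟩ := hb hf
  refine ⟨M, mβ, hM0, hm0, ?_⟩
  intro κ hκ
  have a1 : ∃ ν > 0, ∀ u, ACr (fun p => Jfun I (m p)) β ν u → ‖u‖ ≤ M + 1 := by
    by_contra hcon
    push Not at hcon
    have hk : ∀ k : ℕ, ∃ u, ACr (fun p => Jfun I (m p)) β (1 / ((k : ℝ) + 1)) u ∧ M + 1 < ‖u‖ :=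
      fun k => hcon _ Nat.one_div_pos_of_nat
    choose u h1 h2 using hk
    obtain ⟨k, hk⟩ := (hMb u (cerami_of_ACr I m β u h1) 1 one_pos).exists
    linarith [h2 k]
  have a2 : ∃ ν > 0, ∀ u v, ACr (fun p => Jfun I (m p)) β ν u → ACr (fun p => Jfun I (m p)) β ν v →
      ‖u - v‖ < mβ → ‖u - v‖ < κ := by
    by_contra hcon
    push Not at hcon
    have hk : ∀ k : ℕ, ∃ u v, ACr (fun p => Jfun I (m p)) β (1 / ((k : ℝ) + 1)) u ∧
        ACr (fun p => Jfun I (m p)) β (1 / ((k : ℝ) + 1)) v ∧ ‖u - v‖ < mβ ∧ κ ≤ ‖u - v‖ :=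
      fun k => hcon _ Nat.one_div_pos_of_nat
    choose u v h1 h2 h3 h4 using hk
    obtain ⟨k, hk⟩ := (hmb u v (cerami_of_ACr I m β u h1) (cerami_of_ACr I m β v h2)
      (Eventually.of_forall h3) κ hκ).exists
    linarith [h4 k]
  obtain ⟨ν1, hν1, h1⟩ := a1
  obtain ⟨ν2, hν2, h2⟩ := a2
  exact ⟨min ν1 ν2, by positivity, fun u hu => h1 u (ACr_mono (min_le_left _ _) hu),
    fun u v hu hv => h2 u v (ACr_mono (min_le_right _ _) hu) (ACr_mono (min_le_right _ _) hv)⟩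

end PScPart

section GoodPart

variable {P : Type*} [NormedAddCommGroup P] [InnerProductSpace ℝ P] [CompleteSpace P]

theorem exists_sign (P : Type*) [NormedAddCommGroup P] [InnerProductSpace ℝ P] :
    ∃ s : P → Bool, ∀ p, p ≠ 0 → s (-p) = !(s p) := by
  classical
  refine ⟨fun p => decide (WellOrderingRel p (-p)), fun p hp => ?_⟩
  have hne : p ≠ -p := by
    intro h
    apply hp
    have h2 : (2 : ℝ) • p = 0 := by
      rw [two_smul]; nth_rewrite 2 [h]; simp
    simpa using h2
  simp only [neg_neg]
  by_cases h : WellOrderingRel p (-p)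
  · have h' : ¬ WellOrderingRel (-p) p := fun h' => asymm h h'
    simp [h, h']
  · have h' : WellOrderingRel (-p) p := by
      rcases trichotomous_of WellOrderingRel p (-p) with g | g | g
      · exact absurd g h
      · exact absurd g hne
      · exact g
    simp [h, h']

/-- sublevel data -/
def Good {n : ℕ} (φ : P → ℝ) (L : (Fin n → ℝ) → P) (B : Set (Fin n → ℝ)) (Cv : Finset ℝ) (t : ℝ) :
    Prop :=
  ∃ (X : Set (Fin n → ℝ)) (h : (Fin n → ℝ) → P) (lab : (Fin n → ℝ) → ℝ × Bool) (δ : ℝ),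
    X ⊆ B ∧ IsCompact X ∧ (∀ x ∈ X, -x ∈ X) ∧ ContinuousOn h X ∧ (∀ x ∈ X, h (-x) = - h x) ∧
    (∀ x ∈ X, φ (h x) ≤ t) ∧ (∀ x ∈ B, φ (L x) ≤ 0 → x ∈ X ∧ h x = L x) ∧ 0 < δ ∧
    (∀ x ∈ B, x ∉ X → (lab x).1 ∈ Cv ∧ t < (lab x).1 ∧ lab (-x) = flipL (lab x)) ∧
    (∀ x ∈ B, ∀ y ∈ B, x ∉ X → y ∉ X → ‖x - y‖ ≤ δ →
      ∀ j, ¬ (lab x = (j, true) ∧ lab y = (j, false)))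

theorem good_step {n : ℕ} {φ : P → ℝ} {β M m c : ℝ} (hφ : ContDiff ℝ 1 φ)
    (he : ∀ p, φ (-p) = φ p) (hφ0 : φ 0 = 0)
    (hm : 0 < m) (hM : 0 < M) (hps : PSc φ β M m) (hc0 : 0 < c) (hcβ : c < β)
    (L : (Fin n → ℝ) → P) (B : Set (Fin n → ℝ)) (Cv : Finset ℝ)
    (hCv : ∀ p, fderiv ℝ φ p = 0 → φ p ∈ Cv) :
    ∃ ε > 0, ∀ t, c ≤ t → t ≤ c + ε → Good φ L B Cv t → Good φ L B Cv (c - ε / 4) := by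
  have hiso : ∃ ε0 > 0, ∀ p, fderiv ℝ φ p = 0 → c - ε0 ≤ φ p → φ p ≤ c + ε0 → φ p = c := by
    have hcl : IsClosed ((Cv.erase c : Finset ℝ) : Set ℝ) := Finset.isClosed _
    have hmem : ((Cv.erase c : Finset ℝ) : Set ℝ)ᶜ ∈ 𝓝 c := hcl.isOpen_compl.mem_nhds (by simp)
    obtain ⟨ε0, hε0, hb⟩ := Metric.mem_nhds_iff.1 hmem
    refine ⟨ε0 / 2, by positivity, fun p hp h1 h2 => ?_⟩
    by_contra hne
    have : φ p ∈ Metric.ball c ε0 := by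
      rw [Metric.mem_ball, Real.dist_eq, abs_lt]
      constructor <;> linarith
    exact hb this (Finset.mem_coe.2 (Finset.mem_erase.2 ⟨hne, hCv p hp⟩))
  obtain ⟨ε0, hε0, hiso⟩ := hiso
  obtain ⟨ε, hε, hεε0, hεc, hst⟩ := stage hφ he hm hM hps hc0 hcβ ε0 hε0 hiso
  refine ⟨ε, hε, ?_⟩
  rintro t hct htε ⟨X0, h0, lab0, δ0, hXB, hXc, hXs, hcont, hodd, hle, hL, hδ0, hl1, hl2⟩
  set F : Set P := {y | φ y ≤ c - ε} ∪ {y | ∀ p, fderiv ℝ φ p = 0 → φ p = c → m / 4 ≤ ‖y - p‖}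
    with hF
  have hFcl : IsClosed F := by
    refine (isClosed_le hφ.continuous continuous_const).union ?_
    have : {y : P | ∀ p, fderiv ℝ φ p = 0 → φ p = c → m / 4 ≤ ‖y - p‖} =
        ⋂ p : P, ⋂ (_ : fderiv ℝ φ p = 0), ⋂ (_ : φ p = c), {y | m / 4 ≤ ‖y - p‖} := by
      ext y; simp
    rw [this]
    refine isClosed_iInter fun p => isClosed_iInter fun _ => isClosed_iInter fun _ => ?_
    exact isClosed_le continuous_const (by fun_prop)
  have hcrit : ∀ p, fderiv ℝ φ p = 0 → fderiv ℝ φ (-p) = 0 := by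
    intro p hp
    rw [fderiv_even_odd hφ he p, hp, neg_zero]
  have hFs : ∀ y, y ∈ F → -y ∈ F := by
    rintro y (hy | hy)
    · left
      show φ (-y) ≤ c - ε
      rw [he]; exact hy
    · right
      intro p hp hpc
      have := hy (-p) (hcrit p hp) (by rw [he]; exact hpc)
      have e : -y - p = -(y - -p) := by abel
      rw [e, norm_neg]
      exact this
  set X1 : Set (Fin n → ℝ) := X0 ∩ h0 ⁻¹' F with hX1
  have hX1c : IsCompact X1 :=
    hXc.of_isClosed_subset (hcont.preimage_isClosed_of_isClosed hXc.isClosed hFcl)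
      Set.inter_subset_left
  have hX1s : ∀ x ∈ X1, -x ∈ X1 := by
    rintro x ⟨hx, hx'⟩
    refine ⟨hXs x hx, ?_⟩
    show h0 (-x) ∈ F
    rw [hodd x hx]
    exact hFs _ hx'
  have : CompactSpace X1 := isCompact_iff_compactSpace.1 hX1c
  obtain ⟨g, g1, g2, g3⟩ := hst (X := X1) (fun x => ⟨-x.1, hX1s x.1 x.2⟩)
    ⟨fun x => h0 x.1, (hcont.mono Set.inter_subset_left).domRestrict⟩
    (fun x => hodd x.1 x.2.1) (fun x => (hle x.1 x.2.1).trans htε) (fun x => x.2.2)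
  -- centers
  have hcen : ∀ x, ∃ p : P, x ∈ X0 → x ∉ X1 → fderiv ℝ φ p = 0 ∧ φ p = c ∧ ‖h0 x - p‖ < m / 4 := by
    intro x
    by_cases hx : x ∈ X0 ∧ x ∉ X1
    · have : h0 x ∉ F := fun h => hx.2 ⟨hx.1, h⟩
      have h' : ¬ ∀ p, fderiv ℝ φ p = 0 → φ p = c → m / 4 ≤ ‖h0 x - p‖ := fun h => this (Or.inr h)
      push Not at h'
      obtain ⟨p, h1, h2, h3⟩ := h'
      exact ⟨p, fun _ _ => ⟨h1, h2, h3⟩⟩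
    · exact ⟨0, fun h1 h2 => absurd ⟨h1, h2⟩ hx⟩
  choose cen hcen using hcen
  have huniq : ∀ p q, fderiv ℝ φ p = 0 → fderiv ℝ φ q = 0 → φ p = c → φ q = c → ‖p - q‖ < m →
      p = q := by
    intro p q hp hq hpc hqc h
    exact sep_crit hps hp hq (by linarith) (by linarith) (by linarith) (by linarith) h
  obtain ⟨s, hs⟩ := exists_sign P
  obtain ⟨δ1, hδ1, huc⟩ := Metric.uniformContinuousOn_iff.1
    (hXc.uniformContinuousOn_of_continuous hcont) (m / 4) (by positivity)
  classical
  refine ⟨X1, fun x => if hx : x ∈ X1 then g ⟨x, hx⟩ else 0,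
    fun x => if x ∈ X0 then (c, s (cen x)) else lab0 x, min δ0 (δ1 / 2),
    Set.inter_subset_left.trans hXB, hX1c, hX1s, ?_, ?_, ?_, ?_, by positivity, ?_, ?_⟩
  · rw [continuousOn_iff_continuous_restrict]
    have : X1.domRestrict (fun x => if hx : x ∈ X1 then g ⟨x, hx⟩ else 0) = g := by
      funext x
      show (if hx : x.1 ∈ X1 then g ⟨x.1, hx⟩ else 0) = g x
      rw [dif_pos x.2]
    rw [this]
    exact g.continuous
  · intro x hx
    have := g1 ⟨x, hx⟩
    simp only [hx, hX1s x hx, dif_pos]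
    exact this
  · intro x hx
    simp only [hx, dif_pos]
    exact g3 _
  · intro x hx hx0
    obtain ⟨h1, h2⟩ := hL x hx hx0
    have hle' : φ (h0 x) ≤ c - ε := by rw [h2]; linarith
    have hx1 : x ∈ X1 := ⟨h1, Or.inl hle'⟩
    refine ⟨hx1, ?_⟩
    simp only [hx1, dif_pos]
    rw [g2 ⟨x, hx1⟩ hle']
    exact h2
  · intro x hxB hx1
    by_cases hx0 : x ∈ X0
    · have hnx0 := hXs x hx0
      have hnx1 : -x ∉ X1 := fun h => hx1 (by simpa using hX1s _ h)
      obtain ⟨c1, c2, c3⟩ := hcen x hx0 hx1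
      obtain ⟨d1, d2, d3⟩ := hcen (-x) hnx0 hnx1
      simp only [hx0, hnx0, if_true]
      refine ⟨c2 ▸ hCv _ c1, by linarith, ?_⟩
      have hce : cen (-x) = - cen x := by
        apply huniq _ _ d1 (hcrit _ c1) d2 (by rw [he]; exact c2)
        rw [hodd x hx0] at d3
        have : cen (-x) - -cen x = -(-h0 x - cen (-x)) - (h0 x - cen x) := by abel
        rw [this]
        refine lt_of_le_of_lt (norm_sub_le _ _) ?_
        rw [norm_neg]
        linarith
      have hne : cen x ≠ 0 := by
        intro h
        rw [h, hφ0] at c2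
        linarith
      rw [hce, hs _ hne]
      rfl
    · have hnx0 : -x ∉ X0 := fun h => hx0 (by simpa using hXs _ h)
      obtain ⟨b1, b2, b3⟩ := hl1 x hxB hx0
      simp only [hx0, hnx0, if_false]
      exact ⟨b1, by linarith, b3⟩
  · intro x hxB y hyB hx1 hy1 hxy j
    rintro ⟨e1, e2⟩
    dsimp only at e1 e2
    split_ifs at e1 e2 with a1 a2 a2
    · obtain ⟨c1, c2, c3⟩ := hcen x a1 hx1
      obtain ⟨d1, d2, d3⟩ := hcen y a2 hy1
      have hd : ‖h0 x - h0 y‖ < m / 4 := by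
        rw [← dist_eq_norm]
        apply huc x a1 y a2
        rw [dist_eq_norm]
        have := hxy.trans (min_le_right _ _)
        linarith
      have hce : cen x = cen y := by
        apply huniq _ _ c1 d1 c2 d2
        have : cen x - cen y = -(h0 x - cen x) + (h0 x - h0 y) + (h0 y - cen y) := by abel
        rw [this]
        refine lt_of_le_of_lt (norm_add_le _ _) ?_
        refine lt_of_le_of_lt (add_le_add_left (norm_add_le _ _) _) ?_
        rw [norm_neg]
        linarith
      rw [hce] at e1
      have := e1.symm.trans e2
      simp at this
    · have := (hl1 y hyB a2).2.1
      rw [e2] at this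
      have h3 : c = j := congrArg Prod.fst e1
      dsimp only at this
      linarith
    · have := (hl1 x hxB a1).2.1
      rw [e1] at this
      have h3 : c = j := congrArg Prod.fst e2
      dsimp only at this
      linarith
    · exact hl2 x hxB y hyB a1 a2 (hxy.trans (min_le_left _ _)) j ⟨e1, e2⟩

theorem minimax {n : ℕ} {φ : P → ℝ} {r a : ℝ} (hφ : ContDiff ℝ 1 φ)
    (he : ∀ p, φ (-p) = φ p) (hφ0 : φ 0 = 0) (hr : 0 < r) (ha : 0 < a)
    (hsph : ∀ p, ‖p‖ = r → a ≤ φ p)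
    (hPS : ∀ β, 0 < β → ∃ M m, 0 < M ∧ 0 < m ∧ PSc φ β M m)
    (L : (Fin n → ℝ) →ₗ[ℝ] P) (hLi : Function.Injective L)
    (hneg : ∃ R, ∀ x, R ≤ ‖x‖ → φ (L x) < 0) (Cv : Finset ℝ)
    (hCv : ∀ p, fderiv ℝ φ p = 0 → φ p ∈ Cv) : n ≤ Cv.card := by
  obtain ⟨R0, hR0⟩ := hneg
  obtain ⟨K, hK, hanti⟩ := L.exists_antilipschitzWith (LinearMap.ker_eq_bot.2 hLi)
  have hKn : ∀ x, ‖x‖ ≤ K * ‖L x‖ := fun x => by simpa using hanti.le_mul_dist x 0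
  have hK' : (0 : ℝ) < K := hK
  have hLc : Continuous L := L.continuous_of_finiteDimensional
  set R := max R0 (K * r) + 1 with hR
  have hRp : 0 < R := by
    have : 0 < K * r := by positivity
    have := le_max_right R0 (K * r)
    linarith
  set B : Set (Fin n → ℝ) := Metric.closedBall 0 R with hB
  have hBc : IsCompact B := isCompact_closedBall _ _
  obtain ⟨T0, hT0⟩ := (hBc.image (hφ.continuous.comp hLc)).bddAbove
  set T := max T0 a with hT
  have hgT : Good φ L B Cv T := by
    refine ⟨B, L, fun _ => (0, true), 1, le_rfl, hBc, ?_, hLc.continuousOn, ?_, ?_, ?_, one_pos, ?_, ?_⟩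
    · intro x hx
      simpa [hB] using hx
    · intro x _; simp
    · intro x hx
      exact (hT0 ⟨x, hx, rfl⟩).trans (le_max_left _ _)
    · intro x hx _; exact ⟨hx, rfl⟩
    · intro x hx hx'; exact absurd hx hx'
    · intro x hx y _ hx'; exact absurd hx hx'
  have hexist : ∃ t < a, Good φ L B Cv t := by
    by_contra hcon
    push Not at hcon
    have hlb : ∀ t, Good φ L B Cv t → a ≤ t := by
      intro t ht
      by_contra h
      exact hcon t (not_le.1 h) ht
    set c := sInf {t | Good φ L B Cv t} with hc
    have hbdd : BddBelow {t | Good φ L B Cv t} := ⟨a, fun t ht => hlb t ht⟩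
    have hca : a ≤ c := le_csInf ⟨T, hgT⟩ fun t ht => hlb t ht
    have hcT : c ≤ T := csInf_le hbdd hgT
    obtain ⟨M, m, hM, hm, hps⟩ := hPS (T + 1) (by linarith)
    obtain ⟨ε, hε, hstep⟩ := good_step hφ he hφ0 hm hM hps (by linarith) (by linarith) L B Cv hCv
      (c := c)
    obtain ⟨t, ht, htc⟩ := exists_lt_of_csInf_lt (s := {t | Good φ L B Cv t}) ⟨T, hgT⟩
      (show c < c + ε by linarith)
    have := csInf_le hbdd (hstep t (csInf_le hbdd ht) htc.le ht)
    linarith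
  obtain ⟨t, hta, X, h, lab, δ0, hXB, hXc, hXs, hcont, hodd, hle, hL, hδ0, hl1, hl2⟩ := hexist
  have hA : IsCompact (X ∩ h ⁻¹' {y | ‖y‖ ≤ r}) :=
    hXc.of_isClosed_subset (hcont.preimage_isClosed_of_isClosed hXc.isClosed
      (isClosed_le continuous_norm continuous_const)) Set.inter_subset_left
  have hA' : IsClosed (X ∩ h ⁻¹' {y | r ≤ ‖y‖}) :=
    hcont.preimage_isClosed_of_isClosed hXc.isClosed (isClosed_le continuous_const continuous_norm)
  have hdisj : Disjoint (X ∩ h ⁻¹' {y | ‖y‖ ≤ r}) (X ∩ h ⁻¹' {y | r ≤ ‖y‖}) := by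
    rw [Set.disjoint_left]
    rintro x ⟨hx, h1⟩ ⟨_, h2⟩
    have := hsph (h x) (le_antisymm h1 h2)
    linarith [hle x hx]
  obtain ⟨ρ, hρ, hsep⟩ := Metric.exists_pos_forall_lt_edist hA hA' hdisj
  have hρ' : (0 : ℝ) < ρ := hρ
  have hcard := Cv.length_toList
  rw [← hcard]
  set δ := min (min δ0 ρ) 1 with hδ
  have d1 : δ ≤ δ0 := (min_le_left _ _).trans (min_le_left _ _)
  have d2 : δ ≤ ρ := (min_le_left _ _).trans (min_le_right _ _)
  have d3 : δ ≤ 1 := min_le_right _ _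
  have hout : ∀ x o, ¬ (x ∈ X ∧ ‖h x‖ < r) → (o ∈ X ∧ ‖h o‖ < r) → ‖x - o‖ ≤ δ → x ∈ B ∧ x ∉ X := by
    intro x o hx ho hxo
    constructor
    · have hoR : ‖o‖ < R - 1 := by
        by_contra hcon
        push Not at hcon
        have e1 : R0 ≤ ‖o‖ := by linarith [le_max_left R0 (K * r)]
        have e2 : K * r ≤ ‖o‖ := by linarith [le_max_right R0 (K * r)]
        have e3 := (hL o (hXB ho.1) (hR0 o e1).le).2
        have e4 := e2.trans (hKn o)
        rw [← e3] at e4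
        have := le_of_mul_le_mul_left e4 hK'
        linarith [ho.2]
      rw [hB, mem_closedBall_zero_iff]
      have : ‖x‖ ≤ ‖x - o‖ + ‖o‖ := by simpa using norm_add_le (x - o) o
      linarith
    · intro hxX
      have h1 : r ≤ ‖h x‖ := by
        by_contra hcon
        exact hx ⟨hxX, not_le.1 hcon⟩
      have := hsep o ⟨ho.1, ho.2.le⟩ x ⟨hxX, h1⟩
      rw [edist_nndist, ENNReal.coe_lt_coe, ← NNReal.coe_lt_coe, coe_nndist, dist_comm,
        dist_eq_norm] at this
      linarith
  refine fan_theorem n (n * R + 1) (by positivity) (fun x => x ∈ X ∧ ‖h x‖ < r) ?_ ?_ ?_ lab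
    Cv.toList δ (by positivity) ?_ ?_
  · have h0B : (0 : Fin n → ℝ) ∈ B := by simp [hB, hRp.le]
    obtain ⟨e1, e2⟩ := hL 0 h0B (by rw [map_zero, hφ0])
    refine ⟨e1, ?_⟩
    rw [e2, map_zero, norm_zero]
    exact hr
  · rintro x ⟨hx, hx'⟩
    exact ⟨hXs x hx, by rw [hodd x hx, norm_neg]; exact hx'⟩
  · rintro x ⟨hx, _⟩
    have hxR : ‖x‖ ≤ R := by simpa [hB] using hXB hx
    have : ∑ i, |x i| ≤ ∑ _i : Fin n, R :=
      Finset.sum_le_sum fun i _ => (norm_le_pi_norm x i).trans hxR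
    simp only [Finset.sum_const, Finset.card_univ, Fintype.card_fin, nsmul_eq_mul] at this
    linarith
  · intro x o hx ho hxo
    obtain ⟨e1, e2⟩ := hout x o hx ho hxo
    obtain ⟨b1, b2, b3⟩ := hl1 x e1 e2
    exact ⟨by simpa using b1, b3⟩
  · intro x y o hx hy ho hxo hyo hxy
    obtain ⟨e1, e2⟩ := hout x o hx ho hxo
    obtain ⟨f1, f2⟩ := hout y o hy ho hyo
    exact hl2 x e1 y f1 e2 f2 (hxy.trans d1)

end GoodPart

theorem main_aux
    {P Q : Type*}
    [NormedAddCommGroup P] [InnerProductSpace ℝ P] [CompleteSpace P]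
    [NormedAddCommGroup Q] [NormedSpace ℝ Q] [CompleteSpace Q]
    {G : Type*} [Group G]
    (I : P × Q → ℝ) (r a : ℝ)
    (hI : HypI I r a)
    (m : P → P × Q) (hm : IsMMap I m)
    (hdim : ¬ FiniteDimensional ℝ P)
    (heven : ∀ u : P × Q, I (-u) = I u)
    (act : G → P × Q → P × Q)
    (hact_one : act 1 = id)
    (hact_mul : ∀ g h : G, act (g * h) = act g ∘ act h)
    (hact_isom : ∀ (g : G) (u v : P × Q), XNorm (act g u - act g v) = XNorm (u - v))
    (hJinv : ∀ (g : G) (u : P × Q), Jfun I (act g u) = Jfun I u)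
    (hPinv : ∀ (g : G) (p : P), (act g ((p, 0) : P × Q)).2 = 0)
    (hM : ∀ β : ℝ, 0 < β → McondZero I m act β) :
    ∃ u : ℕ → P, (∀ n, fderiv ℝ (fun p => Jfun I (m p)) (u n) = 0) ∧
      ∀ i j : ℕ, i ≠ j → ∀ g : G, actP act g (u i) ≠ u j := by
  classical
  by_contra hno
  obtain ⟨S, hS1, hS2⟩ := finite_of_not hact_one hact_mul hPinv
    (fun p => fderiv ℝ (fun p => Jfun I (m p)) p = 0) hno
  set Cv : Finset ℝ := S.image (fun p => Jfun I (m p)) with hCvd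
  have hCv : ∀ p, fderiv ℝ (fun p => Jfun I (m p)) p = 0 → Jfun I (m p) ∈ Cv := by
    intro p hp
    obtain ⟨q, hq, g, hg⟩ := hS2 p hp
    rw [← hg, phi_inv hI hm hact_one hact_mul hact_isom hJinv hPinv]
    exact Finset.mem_image.2 ⟨q, hq, rfl⟩
  have hPS : ∀ β, 0 < β → ∃ M mβ, 0 < M ∧ 0 < mβ ∧ PSc (fun p => Jfun I (m p)) β M mβ := by
    intro β hβ
    exact PSc_of_Mcond I m act β (hM β hβ) ⟨S, fun p hp _ _ => hS2 p hp⟩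
  have hlin : ∃ L : (Fin (Cv.card + 1) → ℝ) →ₗ[ℝ] P, Function.Injective L := by
    apply Module.le_rank_iff_exists_linearMap.1
    have h1 : Cardinal.aleph0 ≤ Module.rank ℝ P := by
      by_contra h
      exact hdim (Module.rank_lt_aleph0_iff.1 (not_le.1 h))
    exact (Cardinal.natCast_le_aleph0).trans h1
  obtain ⟨L, hL⟩ := hlin
  have := minimax (phi_contDiff hI hm) (phi_even hI hm heven) (phi_zero hI hm) hI.i6.1 hI.i6.2.2
    (phi_sphere hI hm) hPS L hL (phi_neg_large hI hm L hL) Cv hCv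
  omega

theorem abstract_infinitely_many_critical_orbits
    {P Q : Type*}
    [NormedAddCommGroup P] [InnerProductSpace ℝ P] [CompleteSpace P]
    [NormedAddCommGroup Q] [NormedSpace ℝ Q] [CompleteSpace Q]
    {G : Type*} [Group G]
    (I : P × Q → ℝ) (r a : ℝ)
    (hI : HypI I r a)
    (m : P → P × Q) (hm : IsMMap I m)
    (hdim : ¬ FiniteDimensional ℝ P)
    (heven : ∀ u : P × Q, I (-u) = I u)
    -- the action of G on X
    (act : G → P × Q → P × Q)
    (hact_one : act 1 = id)
    (hact_mul : ∀ g h : G, act (g * h) = act g ∘ act h)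
    -- (G): G acts by isometries, orbits of nonzero points are discrete,
    -- J is G-invariant and X⁺, X⁻ are G-invariant
    (hact_isom : ∀ (g : G) (u v : P × Q), XNorm (act g u - act g v) = XNorm (u - v))
    (hdiscrete : ∀ u : P × Q, u ≠ 0 → ∃ d : ℝ, 0 < d ∧
      ∀ g : G, act g u ≠ u → d ≤ XNorm (act g u - u))
    (hJinv : ∀ (g : G) (u : P × Q), Jfun I (act g u) = Jfun I u)
    (hPinv : ∀ (g : G) (p : P), (act g ((p, 0) : P × Q)).2 = 0)
    (hQinv : ∀ (g : G) (q : Q), (act g ((0, q) : P × Q)).1 = 0)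
    -- (M)_0^β for every β > 0
    (hM : ∀ β : ℝ, 0 < β → McondZero I m act β) :
    -- infinitely many distinct critical orbits of 𝒥 = J∘m
    ∃ u : ℕ → P, (∀ n, fderiv ℝ (fun p => Jfun I (m p)) (u n) = 0) ∧
      ∀ i j : ℕ, i ≠ j → ∀ g : G, actP act g (u i) ≠ u j := by
  exact main_aux I r a hI m hm hdim heven act hact_one hact_mul hact_isom hJinv hPinv hM

end Multiplicity
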